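/- arXiv:2406.09872 — 9 statements merged into one kernel-verified Lean document; each statement's English description precedes it below -/
import Mathlib

section
/- Under the abstract multilevel solver setup, one iteration satisfies the Pythagorean error representation ‖u − u^{i+1}‖² = ‖u − u^i‖² − Σ_{j=0}^{J} λ_j² ‖ρ_j‖², i.e. ‖u − u^{i+1}‖² = ‖u − u^i‖² − η². -/
open RealInnerProductSpace

/-!
If `u` is orthogonal to a direction `d` and the iterate `x` is moved along `d` by the exact line
search, so that `x + l • d` is orthogonal to `d` as well, then `u - x` is the orthogonal sum of
`u - (x + l • d)` and `l • d`, and Pythagoras gives the exact decrease of the squared error. The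
coarse Galerkin correction is such a step with `l = 1`, so the decreases telescope over all levels.
-/

section LineSearch

open scoped InnerProductSpace

variable {𝕜 E : Type*} [RCLike 𝕜] [SeminormedAddCommGroup E] [InnerProductSpace 𝕜 E]

theorem inner_add_smul_eq_zero_of_eq_neg_div {x d : E} {l : 𝕜}
    (hl : ‖d‖ ≠ 0 → l = -⟪d, x⟫_𝕜 / (‖d‖ : 𝕜) ^ 2) : ⟪d, x + l • d⟫_𝕜 = 0 := by
  rw [inner_add_right, inner_smul_right, inner_self_eq_norm_sq_to_K]
  by_cases hd : ‖d‖ = 0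
  · have hdx : ⟪d, x⟫_𝕜 = 0 := inner_eq_zero_of_left x hd
    simp [hd, hdx]
  · have hd' : (‖d‖ : 𝕜) ^ 2 ≠ 0 := pow_ne_zero 2 (RCLike.ofReal_ne_zero.2 hd)
    rw [hl hd, div_mul_cancel₀ _ hd', add_neg_cancel]

theorem norm_sub_add_smul_sq_of_inner_eq_zero {u x d : E} {l : 𝕜}
    (hu : ⟪d, u⟫_𝕜 = 0) (hd : ⟪d, x + l • d⟫_𝕜 = 0) :
    ‖u - (x + l • d)‖ ^ 2 = ‖u - x‖ ^ 2 - ‖l‖ ^ 2 * ‖d‖ ^ 2 := by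
  have orthogonal : ⟪u - (x + l • d), l • d⟫_𝕜 = 0 := by
    rw [inner_eq_zero_symm, inner_smul_left, inner_sub_right, hu, hd, sub_zero, mul_zero]
  have pythagoras := norm_add_sq_eq_norm_sq_add_norm_sq_of_inner_eq_zero _ _ orthogonal
  rw [← sub_sub, sub_add_cancel, norm_smul] at pythagoras
  rw [← sub_sub]
  linarith

theorem norm_sub_sq_eq_sub_sum_of_inner_eq_zero {u : E} {x d : ℕ → E} {l : ℕ → 𝕜} {n : ℕ}
    (hu : ∀ j < n, ⟪d j, u⟫_𝕜 = 0) (hx : ∀ j < n, x (j + 1) = x j + l j • d j)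
    (hd : ∀ j < n, ⟪d j, x (j + 1)⟫_𝕜 = 0) :
    ‖u - x n‖ ^ 2 = ‖u - x 0‖ ^ 2 - ∑ j ∈ Finset.range n, ‖l j‖ ^ 2 * ‖d j‖ ^ 2 := by
  have decrease (j : ℕ) (hj : j ∈ Finset.range n) :
      ‖l j‖ ^ 2 * ‖d j‖ ^ 2 = ‖u - x j‖ ^ 2 - ‖u - x (j + 1)‖ ^ 2 := by
    have hj := Finset.mem_range.1 hj
    rw [hx j hj, norm_sub_add_smul_sq_of_inner_eq_zero (hu j hj) (hx j hj ▸ hd j hj),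
      sub_sub_cancel]
  rw [Finset.sum_congr rfl decrease, Finset.sum_range_sub' (fun j ↦ ‖u - x j‖ ^ 2),
    sub_sub_cancel]

theorem multigrid_error_representation_general (J : ℕ) {V0 Vc : Submodule 𝕜 E} (hVc : Vc ≤ V0)
    {u ui : E} (hu : ∀ v ∈ V0, ⟪u, v⟫_𝕜 = 0) {ρ uu : ℕ → E} {lam : ℕ → 𝕜}
    (hρ0mem : ρ 0 ∈ Vc) (hρ0 : ∀ v ∈ Vc, ⟪ρ 0, v⟫_𝕜 = -⟪ui, v⟫_𝕜)
    (hlam0 : lam 0 = 1) (huu0 : uu 0 = ui + lam 0 • ρ 0)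
    (hρmem : ∀ j ∈ Finset.Icc 1 J, ρ j ∈ V0)
    (hlam : ∀ j ∈ Finset.Icc 1 J, ‖ρ j‖ ≠ 0 →
      lam j = -⟪ρ j, uu (j - 1)⟫_𝕜 / (‖ρ j‖ : 𝕜) ^ 2)
    (huu : ∀ j ∈ Finset.Icc 1 J, uu j = uu (j - 1) + lam j • ρ j) :
    ‖u - uu J‖ ^ 2 =
      ‖u - ui‖ ^ 2 - ∑ j ∈ Finset.range (J + 1), ‖lam j‖ ^ 2 * ‖ρ j‖ ^ 2 := by
  have mem_levels {j : ℕ} (hj : j + 1 < J + 1) : j + 1 ∈ Finset.Icc 1 J :=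
    Finset.mem_Icc.2 ⟨j.succ_pos, Nat.le_of_lt_succ hj⟩
  -- Prepending `ui` to the iterates turns the coarse correction into the first line-search step.
  refine norm_sub_sq_eq_sub_sum_of_inner_eq_zero (n := J + 1)
    (x := fun n ↦ Nat.casesOn n ui uu) (d := ρ) (l := lam)
    (fun j hj ↦ inner_eq_zero_symm.1 (hu _ ?_)) (fun j hj ↦ ?_) (fun j hj ↦ ?_)
  · cases j with
    | zero => exact hVc hρ0mem
    | succ j => exact hρmem _ (mem_levels hj)
  · cases j with
    | zero => exact huu0
    | succ j => exact huu _ (mem_levels hj)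
  · cases j with
    | zero =>
      have galerkin : ⟪ui + ρ 0, ρ 0⟫_𝕜 = 0 := by
        rw [inner_add_left, hρ0 _ hρ0mem, add_neg_cancel]
      simpa only [huu0, hlam0, one_smul] using inner_eq_zero_symm.1 galerkin
    | succ j =>
      have hj := mem_levels hj
      simpa only [huu _ hj] using inner_add_smul_eq_zero_of_eq_neg_div (hlam _ hj)

end LineSearch

/-- Abstract form of the error representation (5.1) of Theorem 5.1 for the
multigrid solver of Algorithm 4.1: one iteration satisfies the Pythagorean
formula `‖u - u^{i+1}‖² = ‖u - u^i‖² - ∑_{j=0}^J λ_j² ‖ρ_j‖²`. -/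
theorem multigrid_error_representation
    {H : Type*} [NormedAddCommGroup H] [InnerProductSpace ℝ H]
    (J : ℕ) {ι : Type*} (𝒱 : ℕ → Finset ι)
    (V0 Vc : Submodule ℝ H) (Vloc : ℕ → ι → Submodule ℝ H)
    (hVc : Vc ≤ V0)
    (hVloc : ∀ j ∈ Finset.Icc 1 J, ∀ a ∈ 𝒱 j, Vloc j a ≤ V0)
    (u ui : H)
    (hu : ∀ v ∈ V0, ⟪u, v⟫ = 0)
    (herr : u - ui ∈ V0)
    (ρ : ℕ → H) (ρloc : ℕ → ι → H) (lam : ℕ → ℝ) (uu : ℕ → H)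
    (hρ0mem : ρ 0 ∈ Vc)
    (hρ0 : ∀ v ∈ Vc, ⟪ρ 0, v⟫ = -⟪ui, v⟫)
    (hlam0 : lam 0 = 1)
    (huu0 : uu 0 = ui + lam 0 • ρ 0)
    (hρlocmem : ∀ j ∈ Finset.Icc 1 J, ∀ a ∈ 𝒱 j, ρloc j a ∈ Vloc j a)
    (hρloc : ∀ j ∈ Finset.Icc 1 J, ∀ a ∈ 𝒱 j, ∀ v ∈ Vloc j a,
      ⟪ρloc j a, v⟫ = -⟪uu (j - 1), v⟫)
    (hρj : ∀ j ∈ Finset.Icc 1 J, ρ j = ∑ a ∈ 𝒱 j, ρloc j a)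
    (hlamj : ∀ j ∈ Finset.Icc 1 J, ρ j ≠ 0 →
      lam j = -⟪uu (j - 1), ρ j⟫ / ‖ρ j‖ ^ 2)
    (hlamj' : ∀ j ∈ Finset.Icc 1 J, ρ j = 0 → lam j = 1)
    (huuj : ∀ j ∈ Finset.Icc 1 J, uu j = uu (j - 1) + lam j • ρ j)
    :
    ‖u - uu J‖ ^ 2 =
      ‖u - ui‖ ^ 2 - ∑ j ∈ Finset.range (J + 1), lam j ^ 2 * ‖ρ j‖ ^ 2 := by
  have hρmem (j : ℕ) (hj : j ∈ Finset.Icc 1 J) : ρ j ∈ V0 :=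
    hρj j hj ▸ sum_mem fun a ha ↦ hVloc j hj a ha (hρlocmem j hj a ha)
  simpa only [Real.norm_eq_abs, sq_abs] using
    multigrid_error_representation_general J hVc hu hρ0mem hρ0 hlam0 huu0 hρmem
      (fun j hj h ↦ real_inner_comm (ρ j) (uu (j - 1)) ▸ hlamj j hj (norm_ne_zero_iff.1 h)) huuj
end

section
/- Under the abstract multilevel solver setup, the algebraic error estimator admits the patchwise and levelwise localized form η² = Σ_{j=0}^J λ_j²‖ρ_j‖² = ‖ρ₀‖² + Σ_{j=1}^J λ_j Σ_{a∈𝒱_j} ‖ρ_{j,a}‖². -/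
/-!
Testing each local problem with its own solution gives `‖ρ_{j,a}‖² = r_j(ρ_{j,a})`, where `r_j` is
the residual functional of the previous iterate; summing over the patches,
`∑_a ‖ρ_{j,a}‖² = r_j(ρ_j)`. The exact line search makes this equal to `λ_j ‖ρ_j‖²`, and multiplying
by `λ_j` localizes the contribution of level `j`.
-/

open RealInnerProductSpace

section Level

variable {E ι : Type*}

theorem sum_norm_sq_eq_map_sum [SeminormedAddCommGroup E] (r : E →+ ℝ) {s : Finset ι} {d : ι → E}
    (hd : ∀ a ∈ s, ‖d a‖ ^ 2 = r (d a)) :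
    ∑ a ∈ s, ‖d a‖ ^ 2 = r (∑ a ∈ s, d a) := by
  rw [map_sum, Finset.sum_congr rfl hd]

theorem sq_mul_norm_sum_sq_eq_mul_sum_norm_sq [SeminormedAddCommGroup E] (r : E →+ ℝ)
    {s : Finset ι} {d : ι → E} {t : ℝ} (hd : ∀ a ∈ s, ‖d a‖ ^ 2 = r (d a))
    (ht : t * ‖∑ a ∈ s, d a‖ ^ 2 = r (∑ a ∈ s, d a)) :
    t ^ 2 * ‖∑ a ∈ s, d a‖ ^ 2 = t * ∑ a ∈ s, ‖d a‖ ^ 2 := by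
  rw [sum_norm_sq_eq_map_sum r hd, ← ht, sq, mul_assoc]

theorem mul_norm_sq_eq_map_of_eq_div [NormedAddCommGroup E] (r : E →+ ℝ) {d : E} {t : ℝ}
    (ht : d ≠ 0 → t = r d / ‖d‖ ^ 2) :
    t * ‖d‖ ^ 2 = r d := by
  rcases eq_or_ne d 0 with rfl | hd
  · simp
  · rw [ht hd, div_mul_cancel₀ _ (pow_ne_zero 2 (norm_ne_zero_iff.mpr hd))]

end Level

/-- The residual functional `v ↦ -⟪w, v⟫` of an iterate `w`. It has no load term because the exact
solution `u` is orthogonal to the test space, so that `⟪u - w, v⟫ = -⟪w, v⟫` there. -/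
noncomputable def residualFunctional {H : Type*} [SeminormedAddCommGroup H]
    [InnerProductSpace ℝ H] (w : H) : H →+ ℝ :=
  -(innerₗ H w).toAddMonoidHom

theorem norm_sq_eq_residualFunctional_of_galerkin {H : Type*} [SeminormedAddCommGroup H]
    [InnerProductSpace ℝ H] {V : Submodule ℝ H} {w d : H} (hd : d ∈ V)
    (h : ∀ v ∈ V, ⟪d, v⟫ = -⟪w, v⟫) :
    ‖d‖ ^ 2 = residualFunctional w d :=
  (real_inner_self_eq_norm_sq d).symm.trans (h d hd)

theorem multigrid_estimator_localization_general {E : Type*} [SeminormedAddCommGroup E]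
    (J : ℕ) {ι : Type*} (𝒱 : ℕ → Finset ι) (r : ℕ → E →+ ℝ)
    (ρ : ℕ → E) (ρloc : ℕ → ι → E) (lam : ℕ → ℝ) (hlam0 : lam 0 = 1)
    (hρloc : ∀ j ∈ Finset.Icc 1 J, ∀ a ∈ 𝒱 j, ‖ρloc j a‖ ^ 2 = r j (ρloc j a))
    (hρj : ∀ j ∈ Finset.Icc 1 J, ρ j = ∑ a ∈ 𝒱 j, ρloc j a)
    (hlamj : ∀ j ∈ Finset.Icc 1 J, lam j * ‖ρ j‖ ^ 2 = r j (ρ j)) :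
    ∑ j ∈ Finset.range (J + 1), lam j ^ 2 * ‖ρ j‖ ^ 2 =
      ‖ρ 0‖ ^ 2 + ∑ j ∈ Finset.Icc 1 J, lam j * ∑ a ∈ 𝒱 j, ‖ρloc j a‖ ^ 2 := by
  have level : ∀ j ∈ Finset.Icc 1 J,
      lam j ^ 2 * ‖ρ j‖ ^ 2 = lam j * ∑ a ∈ 𝒱 j, ‖ρloc j a‖ ^ 2 := fun j hj => by
    have ht := hlamj j hj
    rw [hρj j hj] at ht ⊢
    exact sq_mul_norm_sum_sq_eq_mul_sum_norm_sq (r j) (hρloc j hj) ht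
  rw [Finset.range_eq_Ico, Finset.sum_eq_sum_Ico_succ_bot J.add_one_pos, hlam0, one_pow, one_mul,
    zero_add, Finset.Ico_add_one_right_eq_Icc, Finset.sum_congr rfl level]

/-- Abstract form of the localization formula (5.2) of Theorem 5.1 for
Algorithm 4.1: the algebraic error estimator admits the patchwise and
levelwise localized form
`η² = ∑_{j=0}^J λ_j²‖ρ_j‖² = ‖ρ₀‖² + ∑_{j=1}^J λ_j ∑_{a∈𝒱_j} ‖ρ_{j,a}‖²`. -/
theorem multigrid_estimator_localization
    {H : Type*} [NormedAddCommGroup H] [InnerProductSpace ℝ H]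
    (J : ℕ) {ι : Type*} (𝒱 : ℕ → Finset ι)
    (V0 Vc : Submodule ℝ H) (Vloc : ℕ → ι → Submodule ℝ H)
    (hVc : Vc ≤ V0)
    (hVloc : ∀ j ∈ Finset.Icc 1 J, ∀ a ∈ 𝒱 j, Vloc j a ≤ V0)
    (u ui : H)
    (hu : ∀ v ∈ V0, ⟪u, v⟫ = 0)
    (herr : u - ui ∈ V0)
    (ρ : ℕ → H) (ρloc : ℕ → ι → H) (lam : ℕ → ℝ) (uu : ℕ → H)
    (hρ0mem : ρ 0 ∈ Vc)
    (hρ0 : ∀ v ∈ Vc, ⟪ρ 0, v⟫ = -⟪ui, v⟫)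
    (hlam0 : lam 0 = 1)
    (huu0 : uu 0 = ui + lam 0 • ρ 0)
    (hρlocmem : ∀ j ∈ Finset.Icc 1 J, ∀ a ∈ 𝒱 j, ρloc j a ∈ Vloc j a)
    (hρloc : ∀ j ∈ Finset.Icc 1 J, ∀ a ∈ 𝒱 j, ∀ v ∈ Vloc j a,
      ⟪ρloc j a, v⟫ = -⟪uu (j - 1), v⟫)
    (hρj : ∀ j ∈ Finset.Icc 1 J, ρ j = ∑ a ∈ 𝒱 j, ρloc j a)
    (hlamj : ∀ j ∈ Finset.Icc 1 J, ρ j ≠ 0 →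
      lam j = -⟪uu (j - 1), ρ j⟫ / ‖ρ j‖ ^ 2)
    (hlamj' : ∀ j ∈ Finset.Icc 1 J, ρ j = 0 → lam j = 1)
    (huuj : ∀ j ∈ Finset.Icc 1 J, uu j = uu (j - 1) + lam j • ρ j)
    :
    ∑ j ∈ Finset.range (J + 1), lam j ^ 2 * ‖ρ j‖ ^ 2 =
      ‖ρ 0‖ ^ 2 + ∑ j ∈ Finset.Icc 1 J, lam j * ∑ a ∈ 𝒱 j, ‖ρloc j a‖ ^ 2 := by
  exact multigrid_estimator_localization_general J 𝒱 (fun j => residualFunctional (uu (j - 1)))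
    ρ ρloc lam hlam0
    (fun j hj a ha =>
      norm_sq_eq_residualFunctional_of_galerkin (hρlocmem j hj a ha) (hρloc j hj a ha))
    hρj (fun j hj => mul_norm_sq_eq_map_of_eq_div _ (hlamj j hj))
end

section
/- Under the abstract two-level solver setup, one iteration satisfies the Pythagorean error representation ‖u − u^{i+1}‖² = ‖u − u^i‖² − ‖ρ_H‖² − λ_h²‖ρ_h‖² = ‖u − u^i‖² − η², and the estimator admits the localized form η² = ‖ρ_H‖² + λ_h Σ_{a∈𝒱_H} ‖ρ_a‖². -/
open RealInnerProductSpace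

/-! Testing a residual problem for `x` with its own solution `w` gives `⟪w, w⟫ = -⟪x, w⟫`. If
moreover `⟪u, w⟫ = 0`, this says that the corrected error `u - (x + w)` is orthogonal to `w`, so
the correction removes exactly `‖w‖²` from the squared error. Both the coarse correction `ρ_H` and
the sum `ρ_h` of the local corrections, scaled by `λ_h`, are of this kind. By the choice of `λ_h`,
summing the tested local problems identifies `λ_h ‖ρ_h‖²` with `∑ ‖ρ_a‖²`. -/

section

open scoped InnerProductSpace

variable {𝕜 H ι : Type*} [RCLike 𝕜]

theorem mul_norm_sq_eq_neg_inner_of_eq_div [NormedAddCommGroup H] [InnerProductSpace 𝕜 H]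
    {x d : H} {t : 𝕜} (ht : d ≠ 0 → t = -⟪x, d⟫_𝕜 / (‖d‖ : 𝕜) ^ 2) :
    t * (‖d‖ : 𝕜) ^ 2 = -⟪x, d⟫_𝕜 := by
  rcases eq_or_ne d 0 with rfl | hd
  · simp
  · have hnorm : (‖d‖ : 𝕜) ^ 2 ≠ 0 :=
      pow_ne_zero 2 (RCLike.ofReal_ne_zero.mpr (norm_ne_zero_iff.mpr hd))
    rw [ht hd, div_mul_cancel₀ _ hnorm]

section

variable [SeminormedAddCommGroup H] [InnerProductSpace 𝕜 H]

theorem norm_sub_add_sq_of_inner_self_eq_neg_inner {u x w : H} (hu : ⟪u, w⟫_𝕜 = 0)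
    (hw : ⟪w, w⟫_𝕜 = -⟪x, w⟫_𝕜) :
    ‖u - (x + w)‖ ^ 2 = ‖u - x‖ ^ 2 - ‖w‖ ^ 2 := by
  have horth : ⟪u - (x + w), w⟫_𝕜 = 0 := by
    rw [inner_sub_left, inner_add_left, hu, hw, add_neg_cancel, sub_zero]
  have hpyth := norm_add_sq_eq_norm_sq_add_norm_sq_of_inner_eq_zero _ _ horth
  rw [← sub_sub, sub_add_cancel] at hpyth
  rw [← sub_sub]
  linarith

theorem inner_smul_self_eq_neg_inner_smul {x d : H} {t : ℝ}
    (ht : (t : 𝕜) * (‖d‖ : 𝕜) ^ 2 = -⟪x, d⟫_𝕜) :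
    ⟪(t : 𝕜) • d, (t : 𝕜) • d⟫_𝕜 = -⟪x, (t : 𝕜) • d⟫_𝕜 := by
  rw [inner_smul_left, inner_smul_right, inner_smul_right, inner_self_eq_norm_sq_to_K,
    RCLike.conj_ofReal, ht, mul_neg]

theorem sum_norm_sq_eq_neg_inner_sum {s : Finset ι} {x : H} {w : ι → H}
    (hw : ∀ a ∈ s, ⟪w a, w a⟫_𝕜 = -⟪x, w a⟫_𝕜) :
    ∑ a ∈ s, (‖w a‖ : 𝕜) ^ 2 = -⟪x, ∑ a ∈ s, w a⟫_𝕜 := by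
  rw [inner_sum, ← Finset.sum_neg_distrib]
  exact Finset.sum_congr rfl fun a ha => by rw [← hw a ha, inner_self_eq_norm_sq_to_K]

theorem two_level_error_representation_general {s : Finset ι} {u ui ρH uH ρh : H} {ρa : ι → H}
    {lamh : ℝ} (huρH : ⟪u, ρH⟫_𝕜 = 0) (hρH : ⟪ρH, ρH⟫_𝕜 = -⟪ui, ρH⟫_𝕜) (huH : uH = ui + ρH)
    (huρh : ⟪u, ρh⟫_𝕜 = 0) (hρa : ∀ a ∈ s, ⟪ρa a, ρa a⟫_𝕜 = -⟪uH, ρa a⟫_𝕜)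
    (hρh : ρh = ∑ a ∈ s, ρa a) (hlamh : (lamh : 𝕜) * (‖ρh‖ : 𝕜) ^ 2 = -⟪uH, ρh⟫_𝕜) :
    ‖u - (uH + (lamh : 𝕜) • ρh)‖ ^ 2 =
      ‖u - ui‖ ^ 2 - (‖ρH‖ ^ 2 + lamh ^ 2 * ‖ρh‖ ^ 2) ∧
    ‖ρH‖ ^ 2 + lamh ^ 2 * ‖ρh‖ ^ 2 = ‖ρH‖ ^ 2 + lamh * ∑ a ∈ s, ‖ρa a‖ ^ 2 := by
  have hcoarse : ‖u - uH‖ ^ 2 = ‖u - ui‖ ^ 2 - ‖ρH‖ ^ 2 :=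
    huH ▸ norm_sub_add_sq_of_inner_self_eq_neg_inner huρH hρH
  have hfine : ‖u - (uH + (lamh : 𝕜) • ρh)‖ ^ 2 = ‖u - uH‖ ^ 2 - lamh ^ 2 * ‖ρh‖ ^ 2 := by
    have huw : ⟪u, (lamh : 𝕜) • ρh⟫_𝕜 = 0 := by rw [inner_smul_right, huρh, mul_zero]
    rw [norm_sub_add_sq_of_inner_self_eq_neg_inner huw (inner_smul_self_eq_neg_inner_smul hlamh),
      norm_smul, mul_pow, RCLike.norm_ofReal, sq_abs]
  have hlocal : lamh * ‖ρh‖ ^ 2 = ∑ a ∈ s, ‖ρa a‖ ^ 2 := by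
    have hsum := hlamh.trans (hρh ▸ (sum_norm_sq_eq_neg_inner_sum hρa).symm)
    exact_mod_cast hsum
  constructor
  · rw [hfine, hcoarse, sub_sub]
  · rw [← hlocal, sq lamh, mul_assoc]

end

end

/-- Abstract form of Theorem 5.1 (formulas (5.1) and (5.3)) for the additive
Schwarz domain decomposition solver of Algorithm 5.2: the Pythagorean error
representation `‖u - u^{i+1}‖² = ‖u - u^i‖² - ‖ρ_H‖² - λ_h²‖ρ_h‖²` and the
localized form `η² = ‖ρ_H‖² + λ_h ∑_{a} ‖ρ_a‖²` of the estimator. -/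
theorem two_level_error_representation
    {H : Type*} [NormedAddCommGroup H] [InnerProductSpace ℝ H]
    {ι : Type*} [Fintype ι]
    (V0 VH : Submodule ℝ H) (Va : ι → Submodule ℝ H)
    (hVH : VH ≤ V0) (hVa : ∀ a, Va a ≤ V0)
    (u ui : H)
    (hu : ∀ v ∈ V0, ⟪u, v⟫ = 0)
    (herr : u - ui ∈ V0)
    (ρH : H) (hρHmem : ρH ∈ VH)
    (hρH : ∀ v ∈ VH, ⟪ρH, v⟫ = -⟪ui, v⟫)
    (uH : H) (huH : uH = ui + ρH)
    (ρa : ι → H) (hρamem : ∀ a, ρa a ∈ Va a)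
    (hρa : ∀ a, ∀ v ∈ Va a, ⟪ρa a, v⟫ = -⟪uH, v⟫)
    (ρh : H) (hρh : ρh = ∑ a, ρa a)
    (lamh : ℝ)
    (hlamh : ρh ≠ 0 → lamh = -⟪uH, ρh⟫ / ‖ρh‖ ^ 2)
    (hlamh' : ρh = 0 → lamh = 1)
    :
    ‖u - (uH + lamh • ρh)‖ ^ 2 =
      ‖u - ui‖ ^ 2 - (‖ρH‖ ^ 2 + lamh ^ 2 * ‖ρh‖ ^ 2) ∧
    ‖ρH‖ ^ 2 + lamh ^ 2 * ‖ρh‖ ^ 2 = ‖ρH‖ ^ 2 + lamh * ∑ a, ‖ρa a‖ ^ 2 := by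
  have hρhV0 : ρh ∈ V0 := hρh ▸ V0.sum_mem fun a _ => hVa a (hρamem a)
  exact two_level_error_representation_general (𝕜 := ℝ) (hu _ (hVH hρHmem)) (hρH _ hρHmem) huH
    (hu _ hρhV0) (fun a _ => hρa a _ (hρamem a)) hρh (mul_norm_sq_eq_neg_inner_of_eq_div hlamh)
end

section
/- Under the abstract multilevel solver setup, the algebraic error estimator is a guaranteed lower bound on the algebraic error: η = (Σ_{j=0}^J λ_j²‖ρ_j‖²)^{1/2} ≤ ‖u − u^i‖. -/
open RealInnerProductSpace

/-!
The coarse correction, with step `1`, and the line-search step lengths `λ_j` both make the new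
iterate `u_j` orthogonal to the correction `ρ_j`. As `u` is orthogonal to `V⁰ ∋ ρ_j`, the new error
`u - u_j` is orthogonal to `ρ_j` too, and Pythagoras splits the old error:
`‖u - u_{j-1}‖² = ‖u - u_j‖² + λ_j²‖ρ_j‖²`, with `u^i` in place of `u_{j-1}` when `j = 0`.
Summing over the levels gives `‖u - u^i‖² = ‖u - u_J‖² + η²`.
-/

section Pythagoras

variable {𝕜 H : Type*} [RCLike 𝕜] [SeminormedAddCommGroup H] [InnerProductSpace 𝕜 H]

lemma inner_add_smul_eq_zero_of_eq_neg_inner_div {w r : H} {l : 𝕜}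
    (hl : ‖r‖ ≠ 0 → l = -inner 𝕜 r w / (‖r‖ : 𝕜) ^ 2) :
    inner 𝕜 r (w + l • r) = 0 := by
  rw [inner_add_right, inner_smul_right, inner_self_eq_norm_sq_to_K]
  by_cases hr : ‖r‖ = 0
  · have hrw : inner 𝕜 r w = 0 :=
      norm_le_zero_iff.1 ((norm_inner_le_norm r w).trans_eq (by rw [hr, zero_mul]))
    simp [hr, hrw]
  · have hr' : (‖r‖ : 𝕜) ^ 2 ≠ 0 := pow_ne_zero 2 (RCLike.ofReal_ne_zero.2 hr)
    rw [hl hr, div_mul_cancel₀ _ hr', add_neg_cancel]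

lemma norm_sub_sq_eq_norm_sub_add_smul_sq_add {u w r : H} {l : 𝕜}
    (h : inner 𝕜 (u - (w + l • r)) r = 0) :
    ‖u - w‖ ^ 2 = ‖u - (w + l • r)‖ ^ 2 + ‖l‖ ^ 2 * ‖r‖ ^ 2 := by
  have horth : inner 𝕜 (u - (w + l • r)) (l • r) = 0 := by rw [inner_smul_right, h, mul_zero]
  calc ‖u - w‖ ^ 2 = ‖u - (w + l • r) + l • r‖ ^ 2 := by congr 2; abel
    _ = ‖u - (w + l • r)‖ ^ 2 + ‖l • r‖ ^ 2 := by
      rw [norm_add_sq (𝕜 := 𝕜), horth, map_zero, mul_zero, add_zero]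
    _ = ‖u - (w + l • r)‖ ^ 2 + ‖l‖ ^ 2 * ‖r‖ ^ 2 := by rw [norm_smul, mul_pow]

variable {J : ℕ} {u ui : H} {ρ uu : ℕ → H} {lam : ℕ → 𝕜}

theorem norm_sub_sq_eq_norm_sub_iterate_sq_add_sum
    (huu0 : uu 0 = ui + lam 0 • ρ 0)
    (huuj : ∀ j ∈ Finset.Icc 1 J, uu j = uu (j - 1) + lam j • ρ j)
    (horth : ∀ j ≤ J, inner 𝕜 (u - uu j) (ρ j) = 0) :
    ‖u - ui‖ ^ 2 =
      ‖u - uu J‖ ^ 2 + ∑ j ∈ Finset.range (J + 1), ‖lam j‖ ^ 2 * ‖ρ j‖ ^ 2 := by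
  induction J with
  | zero =>
    have h := horth 0 le_rfl
    rw [huu0] at h
    rw [zero_add, Finset.sum_range_one, huu0, norm_sub_sq_eq_norm_sub_add_smul_sq_add h]
  | succ J ih =>
    have hlast : uu (J + 1) = uu J + lam (J + 1) • ρ (J + 1) :=
      huuj (J + 1) (Finset.right_mem_Icc.2 (Nat.le_add_left 1 J))
    have h := horth (J + 1) le_rfl
    rw [hlast] at h
    rw [ih (fun j hj => huuj j (Finset.Icc_subset_Icc_right J.le_succ hj))
        (fun j hj => horth j (Nat.le_succ_of_le hj)),
      norm_sub_sq_eq_norm_sub_add_smul_sq_add h, ← hlast, Finset.sum_range_succ _ (J + 1)]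
    ring

theorem multigrid_estimator_reliability_general
    (huu0 : uu 0 = ui + lam 0 • ρ 0)
    (huuj : ∀ j ∈ Finset.Icc 1 J, uu j = uu (j - 1) + lam j • ρ j)
    (horth : ∀ j ≤ J, inner 𝕜 (u - uu j) (ρ j) = 0) :
    Real.sqrt (∑ j ∈ Finset.range (J + 1), ‖lam j‖ ^ 2 * ‖ρ j‖ ^ 2) ≤ ‖u - ui‖ := by
  refine Real.sqrt_le_iff.2 ⟨norm_nonneg _, ?_⟩
  rw [norm_sub_sq_eq_norm_sub_iterate_sq_add_sum huu0 huuj horth]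
  exact le_add_of_nonneg_left (sq_nonneg _)

end Pythagoras

lemma correction_mem {R M ι : Type*} [Semiring R] [AddCommMonoid M] [Module R M]
    {J : ℕ} {𝒱 : ℕ → Finset ι} {V0 : Submodule R M} {ρ : ℕ → M} {ρloc : ℕ → ι → M}
    (hρ0mem : ρ 0 ∈ V0)
    (hρlocmem : ∀ j ∈ Finset.Icc 1 J, ∀ a ∈ 𝒱 j, ρloc j a ∈ V0)
    (hρj : ∀ j ∈ Finset.Icc 1 J, ρ j = ∑ a ∈ 𝒱 j, ρloc j a) :
    ∀ j ≤ J, ρ j ∈ V0 := by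
  rintro (_ | j) hj
  · exact hρ0mem
  · have hlevel : j + 1 ∈ Finset.Icc 1 J := Finset.mem_Icc.2 ⟨Nat.le_add_left 1 j, hj⟩
    rw [hρj _ hlevel]
    exact sum_mem fun a ha => hρlocmem _ hlevel a ha

lemma inner_iterate_correction_eq_zero {H : Type*}
    [SeminormedAddCommGroup H] [InnerProductSpace ℝ H] {J : ℕ} {ui : H} {ρ uu : ℕ → H} {lam : ℕ → ℝ}
    (hρ0 : ⟪ρ 0, ρ 0⟫ = -⟪ui, ρ 0⟫) (hlam0 : lam 0 = 1) (huu0 : uu 0 = ui + lam 0 • ρ 0)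
    (hlamj : ∀ j ∈ Finset.Icc 1 J, ρ j ≠ 0 → lam j = -⟪uu (j - 1), ρ j⟫ / ‖ρ j‖ ^ 2)
    (huuj : ∀ j ∈ Finset.Icc 1 J, uu j = uu (j - 1) + lam j • ρ j) :
    ∀ j ≤ J, ⟪uu j, ρ j⟫ = 0 := by
  rintro (_ | j) hj
  · rw [huu0, hlam0, one_smul, inner_add_left, hρ0, add_neg_cancel]
  · have hlevel : j + 1 ∈ Finset.Icc 1 J := Finset.mem_Icc.2 ⟨Nat.le_add_left 1 j, hj⟩
    rw [huuj _ hlevel, real_inner_comm]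
    refine inner_add_smul_eq_zero_of_eq_neg_inner_div fun hρ => ?_
    rw [real_inner_comm]
    exact hlamj _ hlevel (ne_zero_of_norm_ne_zero hρ)

/-- Abstract form of the reliability statement (5.5) of Theorem 5.2 for the
multigrid solver of Algorithm 4.1: the algebraic error estimator
`η = (∑_{j=0}^J λ_j²‖ρ_j‖²)^{1/2}` is a guaranteed lower bound on the
algebraic error `‖u - u^i‖`. -/
theorem multigrid_estimator_reliability
    {H : Type*} [NormedAddCommGroup H] [InnerProductSpace ℝ H]
    (J : ℕ) {ι : Type*} (𝒱 : ℕ → Finset ι)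
    (V0 Vc : Submodule ℝ H) (Vloc : ℕ → ι → Submodule ℝ H)
    (hVc : Vc ≤ V0)
    (hVloc : ∀ j ∈ Finset.Icc 1 J, ∀ a ∈ 𝒱 j, Vloc j a ≤ V0)
    (u ui : H)
    (hu : ∀ v ∈ V0, ⟪u, v⟫ = 0)
    (herr : u - ui ∈ V0)
    (ρ : ℕ → H) (ρloc : ℕ → ι → H) (lam : ℕ → ℝ) (uu : ℕ → H)
    (hρ0mem : ρ 0 ∈ Vc)
    (hρ0 : ∀ v ∈ Vc, ⟪ρ 0, v⟫ = -⟪ui, v⟫)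
    (hlam0 : lam 0 = 1)
    (huu0 : uu 0 = ui + lam 0 • ρ 0)
    (hρlocmem : ∀ j ∈ Finset.Icc 1 J, ∀ a ∈ 𝒱 j, ρloc j a ∈ Vloc j a)
    (hρloc : ∀ j ∈ Finset.Icc 1 J, ∀ a ∈ 𝒱 j, ∀ v ∈ Vloc j a,
      ⟪ρloc j a, v⟫ = -⟪uu (j - 1), v⟫)
    (hρj : ∀ j ∈ Finset.Icc 1 J, ρ j = ∑ a ∈ 𝒱 j, ρloc j a)
    (hlamj : ∀ j ∈ Finset.Icc 1 J, ρ j ≠ 0 →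
      lam j = -⟪uu (j - 1), ρ j⟫ / ‖ρ j‖ ^ 2)
    (hlamj' : ∀ j ∈ Finset.Icc 1 J, ρ j = 0 → lam j = 1)
    (huuj : ∀ j ∈ Finset.Icc 1 J, uu j = uu (j - 1) + lam j • ρ j)
    :
    Real.sqrt (∑ j ∈ Finset.range (J + 1), lam j ^ 2 * ‖ρ j‖ ^ 2) ≤
      ‖u - ui‖ := by
  have hmem := correction_mem (hVc hρ0mem)
    (fun j hj a ha => hVloc j hj a ha (hρlocmem j hj a ha)) hρj
  have hexact := inner_iterate_correction_eq_zero (hρ0 _ hρ0mem) hlam0 huu0 hlamj huuj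
  simpa only [Real.norm_eq_abs, sq_abs] using multigrid_estimator_reliability_general huu0 huuj
    fun j hj => by rw [inner_sub_left, hu _ (hmem j hj), hexact j hj, sub_zero]
end

section
/- Under the abstract multilevel solver setup, suppose the error e := u − u^i decomposes as e = v₀ + Σ_{j=1}^J Σ_{a∈𝒱_j} v_{j,a} with v₀ ∈ V₀⁰ and v_{j,a} ∈ V_{j,a}⁰. Then ‖e‖² = ⟨ρ₀, v₀⟩ + Σ_{j=1}^J Σ_{a∈𝒱_j} ⟨ρ_{j,a}, v_{j,a}⟩ + Σ_{j=1}^J Σ_{m=0}^{j−1} λ_m Σ_{a∈𝒱_j} ⟨ρ_m, v_{j,a}⟩. -/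
open RealInnerProductSpace

/-!
Since `u` is orthogonal to the error `e = u - uⁱ`, we have `‖e‖² = -⟪uⁱ, e⟫`, which is linear in
the decomposition of `e`. On the coarse part, `-⟪uⁱ, ·⟫` is represented by `ρ₀`. On a level-`j`
patch, `ρ_{j,a}` represents `-⟪u_{j-1}, ·⟫` instead, and writing `u_{j-1}` as `uⁱ` plus the earlier
updates `λ_m ρ_m` produces the cross terms.
-/

theorem eq_add_sum_range_succ_of_step {M : Type*} [AddCommMonoid M] {x₀ : M} {x d : ℕ → M} {n : ℕ}
    (hzero : x 0 = x₀ + d 0) (hstep : ∀ j ∈ Finset.Icc 1 n, x j = x (j - 1) + d j) :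
    x n = x₀ + ∑ m ∈ Finset.range (n + 1), d m := by
  induction n with
  | zero => simpa using hzero
  | succ n ih =>
    have hprev : x n = x₀ + ∑ m ∈ Finset.range (n + 1), d m :=
      ih fun j hj => hstep j (Finset.Icc_subset_Icc_right n.le_succ hj)
    rw [hstep (n + 1) (Finset.right_mem_Icc.mpr n.succ_pos), Nat.add_sub_cancel, hprev,
      Finset.sum_range_succ _ (n + 1), add_assoc]

section InnerProduct

open scoped InnerProductSpace ComplexConjugate

variable {𝕜 E : Type*} [RCLike 𝕜] [SeminormedAddCommGroup E] [InnerProductSpace 𝕜 E]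

theorem norm_sub_sq_eq_neg_inner_of_inner_eq_zero {x y : E} (h : ⟪x, x - y⟫_𝕜 = 0) :
    (‖x - y‖ : 𝕜) ^ 2 = -⟪y, x - y⟫_𝕜 := by
  rw [← inner_self_eq_norm_sq_to_K, inner_sub_left, h, zero_sub]

/-- The compact residual formula (4.9), solved for the initial residual. -/
theorem neg_inner_initial_eq_inner_add_sum {x₀ r v : E} {x d : ℕ → E} {c : ℕ → 𝕜} {j : ℕ}
    (hj : 1 ≤ j) (hzero : x 0 = x₀ + c 0 • d 0)
    (hstep : ∀ m ∈ Finset.Icc 1 (j - 1), x m = x (m - 1) + c m • d m)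
    (hr : ⟪r, v⟫_𝕜 = -⟪x (j - 1), v⟫_𝕜) :
    -⟪x₀, v⟫_𝕜 = ⟪r, v⟫_𝕜 + ∑ m ∈ Finset.range j, conj (c m) * ⟪d m, v⟫_𝕜 := by
  have hx : x (j - 1) = x₀ + ∑ m ∈ Finset.range j, c m • d m := by
    simpa only [Nat.sub_add_cancel hj] using
      eq_add_sum_range_succ_of_step (d := fun m => c m • d m) hzero hstep
  rw [hr, hx, inner_add_left, sum_inner]
  simp only [inner_smul_left]
  ring

theorem multigrid_error_expansion_general (J : ℕ) {ι : Type*} (𝒱 : ℕ → Finset ι) (u ui : E)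
    (hu : ⟪u, u - ui⟫_𝕜 = 0)
    (ρ : ℕ → E) (ρloc : ℕ → ι → E) (lam : ℕ → 𝕜) (uu : ℕ → E) (v0 : E) (vja : ℕ → ι → E)
    (hρ0 : ⟪ρ 0, v0⟫_𝕜 = -⟪ui, v0⟫_𝕜)
    (huu0 : uu 0 = ui + lam 0 • ρ 0)
    (hρloc : ∀ j ∈ Finset.Icc 1 J, ∀ a ∈ 𝒱 j,
      ⟪ρloc j a, vja j a⟫_𝕜 = -⟪uu (j - 1), vja j a⟫_𝕜)
    (huuj : ∀ j ∈ Finset.Icc 1 J, uu j = uu (j - 1) + lam j • ρ j)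
    (hdec : u - ui = v0 + ∑ j ∈ Finset.Icc 1 J, ∑ a ∈ 𝒱 j, vja j a) :
    (‖u - ui‖ : 𝕜) ^ 2 =
      ⟪ρ 0, v0⟫_𝕜 +
      (∑ j ∈ Finset.Icc 1 J, ∑ a ∈ 𝒱 j, ⟪ρloc j a, vja j a⟫_𝕜) +
      ∑ j ∈ Finset.Icc 1 J, ∑ m ∈ Finset.range j,
        conj (lam m) * ∑ a ∈ 𝒱 j, ⟪ρ m, vja j a⟫_𝕜 := by
  have hpatch : ∀ j ∈ Finset.Icc 1 J, ∀ a ∈ 𝒱 j, -⟪ui, vja j a⟫_𝕜 =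
      ⟪ρloc j a, vja j a⟫_𝕜 + ∑ m ∈ Finset.range j, conj (lam m) * ⟪ρ m, vja j a⟫_𝕜 := by
    intro j hj a ha
    obtain ⟨hj1, hjJ⟩ := Finset.mem_Icc.mp hj
    exact neg_inner_initial_eq_inner_add_sum hj1 huu0
      (fun m hm => huuj m (Finset.Icc_subset_Icc_right ((Nat.sub_le j 1).trans hjJ) hm))
      (hρloc j hj a ha)
  calc (‖u - ui‖ : 𝕜) ^ 2
      = -⟪ui, u - ui⟫_𝕜 := norm_sub_sq_eq_neg_inner_of_inner_eq_zero hu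
    _ = -⟪ui, v0⟫_𝕜 + ∑ j ∈ Finset.Icc 1 J, ∑ a ∈ 𝒱 j, -⟪ui, vja j a⟫_𝕜 := by
      simp only [hdec, inner_add_right, inner_sum, neg_add, Finset.sum_neg_distrib]
    _ = ⟪ρ 0, v0⟫_𝕜 + ∑ j ∈ Finset.Icc 1 J, ∑ a ∈ 𝒱 j, (⟪ρloc j a, vja j a⟫_𝕜 +
          ∑ m ∈ Finset.range j, conj (lam m) * ⟪ρ m, vja j a⟫_𝕜) := by
      rw [hρ0, Finset.sum_congr rfl fun j hj => Finset.sum_congr rfl (hpatch j hj)]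
    _ = _ := by
      simp only [Finset.sum_add_distrib, Finset.mul_sum, ← add_assoc]
      exact congrArg _ (Finset.sum_congr rfl fun _ _ => Finset.sum_comm)

end InnerProduct

/-- Abstract form of the key expansion in the proof of Theorem 5.2
(Section 8.1): if the error `e = u - u^i` decomposes as
`e = v₀ + ∑_{j=1}^J ∑_{a ∈ 𝒱 j} v_{j,a}` with `v₀ ∈ V₀⁰`, `v_{j,a} ∈ V_{j,a}⁰`,
then `‖e‖² = ⟪ρ₀, v₀⟫ + ∑_j ∑_a ⟪ρ_{j,a}, v_{j,a}⟫
+ ∑_j ∑_{m<j} λ_m ∑_a ⟪ρ_m, v_{j,a}⟫`. -/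
theorem multigrid_error_expansion
    {H : Type*} [NormedAddCommGroup H] [InnerProductSpace ℝ H]
    (J : ℕ) {ι : Type*} (𝒱 : ℕ → Finset ι)
    (V0 Vc : Submodule ℝ H) (Vloc : ℕ → ι → Submodule ℝ H)
    (hVc : Vc ≤ V0)
    (hVloc : ∀ j ∈ Finset.Icc 1 J, ∀ a ∈ 𝒱 j, Vloc j a ≤ V0)
    (u ui : H)
    (hu : ∀ v ∈ V0, ⟪u, v⟫ = 0)
    (herr : u - ui ∈ V0)
    (ρ : ℕ → H) (ρloc : ℕ → ι → H) (lam : ℕ → ℝ) (uu : ℕ → H)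
    (hρ0mem : ρ 0 ∈ Vc)
    (hρ0 : ∀ v ∈ Vc, ⟪ρ 0, v⟫ = -⟪ui, v⟫)
    (hlam0 : lam 0 = 1)
    (huu0 : uu 0 = ui + lam 0 • ρ 0)
    (hρlocmem : ∀ j ∈ Finset.Icc 1 J, ∀ a ∈ 𝒱 j, ρloc j a ∈ Vloc j a)
    (hρloc : ∀ j ∈ Finset.Icc 1 J, ∀ a ∈ 𝒱 j, ∀ v ∈ Vloc j a,
      ⟪ρloc j a, v⟫ = -⟪uu (j - 1), v⟫)
    (hρj : ∀ j ∈ Finset.Icc 1 J, ρ j = ∑ a ∈ 𝒱 j, ρloc j a)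
    (hlamj : ∀ j ∈ Finset.Icc 1 J, ρ j ≠ 0 →
      lam j = -⟪uu (j - 1), ρ j⟫ / ‖ρ j‖ ^ 2)
    (hlamj' : ∀ j ∈ Finset.Icc 1 J, ρ j = 0 → lam j = 1)
    (huuj : ∀ j ∈ Finset.Icc 1 J, uu j = uu (j - 1) + lam j • ρ j)
    (v0 : H) (vja : ℕ → ι → H)
    (hv0 : v0 ∈ Vc)
    (hvja : ∀ j ∈ Finset.Icc 1 J, ∀ a ∈ 𝒱 j, vja j a ∈ Vloc j a)
    (hdec : u - ui = v0 + ∑ j ∈ Finset.Icc 1 J, ∑ a ∈ 𝒱 j, vja j a) :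
    ‖u - ui‖ ^ 2 =
      ⟪ρ 0, v0⟫ +
      (∑ j ∈ Finset.Icc 1 J, ∑ a ∈ 𝒱 j, ⟪ρloc j a, vja j a⟫) +
      ∑ j ∈ Finset.Icc 1 J, ∑ m ∈ Finset.range j,
        lam m * ∑ a ∈ 𝒱 j, ⟪ρ m, vja j a⟫ := by
  simpa only [RCLike.ofReal_real_eq_id, id_eq, conj_trivial] using
    multigrid_error_expansion_general J 𝒱 u ui (hu _ herr) ρ ρloc lam uu v0 vja (hρ0 v0 hv0) huu0
      (fun j hj a ha => hρloc j hj a ha _ (hvja j hj a ha)) huuj hdec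
end

section
/- Under the abstract two-level solver setup, suppose the error e := u − u^i decomposes as e = v₀ + Σ_{a∈𝒱_H} v_a with v₀ ∈ V_H⁰, v_a ∈ V_a⁰, and ‖v₀‖² + Σ_a ‖v_a‖² ≤ C² ‖e‖² for some constant C > 0. Then ‖e‖² ≤ (1 + C²)(‖ρ_H‖² + Σ_{a∈𝒱_H} ‖ρ_a‖²). If moreover N ≥ 1 is such that ‖Σ_{a∈𝒱_H} x_a‖² ≤ N Σ_{a∈𝒱_H} ‖x_a‖² for all choices x_a ∈ V_a⁰, then the estimator η := (‖ρ_H‖² + λ_h²‖ρ_h‖²)^{1/2} satisfies β‖e‖ ≤ η with β = (N(1 + C²))^{−1/2}. -/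
open RealInnerProductSpace

/-!
Let `e = u - uⁱ`. Galerkin orthogonality says that `e - ρ_H` is orthogonal to the coarse space and
that `e - ρ_H - ρ_a` is orthogonal to the `a`-th subdomain space. Pairing `e = v₀ + ∑ v_a` with `e`
therefore gives `‖e‖² = ⟨e, ρ_H⟩ + ∑ ⟨v_a, ρ_a⟩`, and Cauchy–Schwarz together with the stability of
the decomposition yields the first bound. For the second, the step length makes `λ_h ρ_h` the
orthogonal projection of `e - ρ_H` onto the line of `ρ_h`, so
`∑ ‖ρ_a‖² = ⟨ρ_h, e - ρ_H⟩ = ⟨ρ_h, λ_h ρ_h⟩ ≤ ‖ρ_h‖ ‖λ_h ρ_h‖`, where finite overlap bounds `‖ρ_h‖`.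
-/

lemma le_of_sq_le_mul_self {R : Type*} [Semiring R] [LinearOrder R] [IsStrictOrderedRing R]
    {a b : R} (hb : 0 ≤ b) (h : a ^ 2 ≤ b * a) : a ≤ b := by
  by_contra! hba
  rw [sq] at h
  exact h.not_gt (mul_lt_mul_of_pos_right hba (hb.trans_lt hba))

lemma inv_sqrt_mul_le_sqrt {K a b : ℝ} (hK : 0 < K) (h : a ^ 2 ≤ K * b) :
    (√K)⁻¹ * a ≤ √b := by
  rw [inv_mul_le_iff₀ (Real.sqrt_pos.mpr hK), ← Real.sqrt_mul hK.le]
  exact Real.le_sqrt_of_sq_le h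

section CauchySchwarz

variable {𝕜 E ι : Type*} [RCLike 𝕜] [SeminormedAddCommGroup E] [InnerProductSpace 𝕜 E]

lemma norm_sum_inner_sq_le (s : Finset ι) (x y : ι → E) :
    ‖∑ i ∈ s, inner 𝕜 (x i) (y i)‖ ^ 2 ≤ (∑ i ∈ s, ‖x i‖ ^ 2) * ∑ i ∈ s, ‖y i‖ ^ 2 :=
  calc ‖∑ i ∈ s, inner 𝕜 (x i) (y i)‖ ^ 2
    _ ≤ (∑ i ∈ s, ‖x i‖ * ‖y i‖) ^ 2 := by
      gcongr
      exact norm_sum_le_of_le s fun i _ => norm_inner_le_norm (x i) (y i)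
    _ ≤ (∑ i ∈ s, ‖x i‖ ^ 2) * ∑ i ∈ s, ‖y i‖ ^ 2 := Finset.sum_mul_sq_le_sq_mul_sq s _ _

lemma norm_inner_add_sum_inner_sq_le [Fintype ι] (x₀ y₀ : E) (x y : ι → E) :
    ‖inner 𝕜 x₀ y₀ + ∑ i, inner 𝕜 (x i) (y i)‖ ^ 2 ≤
      (‖x₀‖ ^ 2 + ∑ i, ‖x i‖ ^ 2) * (‖y₀‖ ^ 2 + ∑ i, ‖y i‖ ^ 2) := by
  simpa only [Fintype.sum_option, Option.elim] using
    norm_sum_inner_sq_le (𝕜 := 𝕜) Finset.univ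
      (fun o : Option ι => o.elim x₀ x) (fun o => o.elim y₀ y)

end CauchySchwarz

section SubspaceCorrection

variable {𝕜 E ι : Type*} [RCLike 𝕜] [NormedAddCommGroup E] [InnerProductSpace 𝕜 E]

lemma inner_eq_inner_of_sub_mem_orthogonal {W : Submodule 𝕜 E} {r ρ v : E}
    (hv : v ∈ W) (h : r - ρ ∈ Wᗮ) : inner 𝕜 v r = inner 𝕜 v ρ := by
  rw [← sub_eq_zero, ← inner_sub_right]
  exact W.mem_orthogonal _ |>.mp h v hv

lemma sub_sub_mem_orthogonal {W : Submodule 𝕜 E} {u w ρ : E} (hu : u ∈ Wᗮ)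
    (hρ : ∀ v ∈ W, inner 𝕜 ρ v = -inner 𝕜 w v) : u - w - ρ ∈ Wᗮ := by
  refine W.mem_orthogonal' _ |>.mpr fun v hv => ?_
  rw [inner_sub_left, inner_sub_left, W.inner_left_of_mem_orthogonal hv hu, hρ v hv]
  ring

lemma inner_smul_self_eq_of_eq_div {g r : E} {c : 𝕜}
    (hc : g ≠ 0 → c = inner 𝕜 g r / (‖g‖ : 𝕜) ^ 2) :
    inner 𝕜 g (c • g) = inner 𝕜 g r := by
  obtain rfl | hg := eq_or_ne g 0
  · simp only [inner_zero_left]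
  · have hg' : (‖g‖ : 𝕜) ^ 2 ≠ 0 :=
      pow_ne_zero 2 (RCLike.ofReal_ne_zero.mpr (norm_ne_zero_iff.mpr hg))
    rw [inner_smul_right, inner_self_eq_norm_sq_to_K, hc hg, div_mul_cancel₀ _ hg']

variable [Fintype ι] {W₀ : Submodule 𝕜 E} {W : ι → Submodule 𝕜 E}

lemma inner_self_eq_inner_add_sum_inner {e v₀ ρ₀ : E} {v ρ : ι → E}
    (hv₀ : v₀ ∈ W₀) (hv : ∀ a, v a ∈ W a) (he : e = v₀ + ∑ a, v a)
    (hρ₀ : e - ρ₀ ∈ W₀ᗮ) (hρ : ∀ a, e - ρ₀ - ρ a ∈ (W a)ᗮ) :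
    inner 𝕜 e e = inner 𝕜 e ρ₀ + ∑ a, inner 𝕜 (v a) (ρ a) := by
  have residual : inner 𝕜 e (e - ρ₀) = ∑ a, inner 𝕜 (v a) (ρ a) :=
    calc inner 𝕜 e (e - ρ₀)
      _ = inner 𝕜 v₀ (e - ρ₀) + ∑ a, inner 𝕜 (v a) (e - ρ₀) := by
        rw [← sum_inner, ← inner_add_left, ← he]
      _ = ∑ a, inner 𝕜 (v a) (e - ρ₀) := by
        rw [W₀.inner_right_of_mem_orthogonal hv₀ hρ₀, zero_add]
      _ = ∑ a, inner 𝕜 (v a) (ρ a) :=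
        Finset.sum_congr rfl fun a _ => inner_eq_inner_of_sub_mem_orthogonal (hv a) (hρ a)
  rw [← residual, ← inner_add_right, add_sub_cancel]

theorem norm_sq_le_of_stable_decomposition {e v₀ ρ₀ : E} {v ρ : ι → E} {K : ℝ} (hK : 0 ≤ K)
    (hv₀ : v₀ ∈ W₀) (hv : ∀ a, v a ∈ W a) (he : e = v₀ + ∑ a, v a)
    (hρ₀ : e - ρ₀ ∈ W₀ᗮ) (hρ : ∀ a, e - ρ₀ - ρ a ∈ (W a)ᗮ)
    (hstab : ∑ a, ‖v a‖ ^ 2 ≤ K * ‖e‖ ^ 2) :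
    ‖e‖ ^ 2 ≤ (1 + K) * (‖ρ₀‖ ^ 2 + ∑ a, ‖ρ a‖ ^ 2) := by
  refine le_of_sq_le_mul_self (by positivity) ?_
  calc (‖e‖ ^ 2) ^ 2
    _ = ‖inner 𝕜 e ρ₀ + ∑ a, inner 𝕜 (v a) (ρ a)‖ ^ 2 := by
      rw [← inner_self_eq_inner_add_sum_inner hv₀ hv he hρ₀ hρ, inner_self_eq_norm_sq_to_K,
        norm_pow, RCLike.norm_ofReal, abs_norm]
    _ ≤ (‖e‖ ^ 2 + ∑ a, ‖v a‖ ^ 2) * (‖ρ₀‖ ^ 2 + ∑ a, ‖ρ a‖ ^ 2) :=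
      norm_inner_add_sum_inner_sq_le e ρ₀ v ρ
    _ ≤ (‖e‖ ^ 2 + K * ‖e‖ ^ 2) * (‖ρ₀‖ ^ 2 + ∑ a, ‖ρ a‖ ^ 2) := by gcongr
    _ = (1 + K) * (‖ρ₀‖ ^ 2 + ∑ a, ‖ρ a‖ ^ 2) * ‖e‖ ^ 2 := by ring

lemma inner_sum_eq_sum_norm_sq {r : E} {ρ : ι → E}
    (hρ_mem : ∀ a, ρ a ∈ W a) (hρ : ∀ a, r - ρ a ∈ (W a)ᗮ) :
    inner 𝕜 (∑ a, ρ a) r = ((∑ a, ‖ρ a‖ ^ 2 : ℝ) : 𝕜) := by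
  push_cast
  rw [sum_inner]
  refine Finset.sum_congr rfl fun a _ => ?_
  rw [inner_eq_inner_of_sub_mem_orthogonal (hρ_mem a) (hρ a), inner_self_eq_norm_sq_to_K]

theorem sum_norm_sq_le_mul_norm_sq_of_overlap {r p : E} {ρ : ι → E} {N : ℝ} (hN : 0 ≤ N)
    (hρ_mem : ∀ a, ρ a ∈ W a) (hρ : ∀ a, r - ρ a ∈ (W a)ᗮ)
    (hoverlap : ‖∑ a, ρ a‖ ^ 2 ≤ N * ∑ a, ‖ρ a‖ ^ 2)
    (hp : inner 𝕜 (∑ a, ρ a) p = inner 𝕜 (∑ a, ρ a) r) :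
    ∑ a, ‖ρ a‖ ^ 2 ≤ N * ‖p‖ ^ 2 := by
  refine le_of_sq_le_mul_self (by positivity) ?_
  calc (∑ a, ‖ρ a‖ ^ 2) ^ 2
    _ = ‖inner 𝕜 (∑ a, ρ a) p‖ ^ 2 := by
      rw [hp, inner_sum_eq_sum_norm_sq hρ_mem hρ, RCLike.norm_ofReal, sq_abs]
    _ ≤ (‖∑ a, ρ a‖ * ‖p‖) ^ 2 := by
      gcongr
      exact norm_inner_le_norm _ _
    _ = ‖∑ a, ρ a‖ ^ 2 * ‖p‖ ^ 2 := mul_pow _ _ 2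
    _ ≤ N * (∑ a, ‖ρ a‖ ^ 2) * ‖p‖ ^ 2 := by gcongr
    _ = N * ‖p‖ ^ 2 * ∑ a, ‖ρ a‖ ^ 2 := by ring

theorem norm_sq_le_of_stable_decomposition_of_overlap {e v₀ ρ₀ p : E} {v ρ : ι → E} {K N : ℝ}
    (hK : 0 ≤ K) (hN : 1 ≤ N)
    (hv₀ : v₀ ∈ W₀) (hv : ∀ a, v a ∈ W a) (he : e = v₀ + ∑ a, v a)
    (hρ₀ : e - ρ₀ ∈ W₀ᗮ) (hρ_mem : ∀ a, ρ a ∈ W a) (hρ : ∀ a, e - ρ₀ - ρ a ∈ (W a)ᗮ)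
    (hstab : ∑ a, ‖v a‖ ^ 2 ≤ K * ‖e‖ ^ 2)
    (hoverlap : ‖∑ a, ρ a‖ ^ 2 ≤ N * ∑ a, ‖ρ a‖ ^ 2)
    (hp : inner 𝕜 (∑ a, ρ a) p = inner 𝕜 (∑ a, ρ a) (e - ρ₀)) :
    ‖e‖ ^ 2 ≤ N * (1 + K) * (‖ρ₀‖ ^ 2 + ‖p‖ ^ 2) :=
  calc ‖e‖ ^ 2
    _ ≤ (1 + K) * (‖ρ₀‖ ^ 2 + ∑ a, ‖ρ a‖ ^ 2) :=
      norm_sq_le_of_stable_decomposition hK hv₀ hv he hρ₀ hρ hstab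
    _ ≤ (1 + K) * (N * ‖ρ₀‖ ^ 2 + N * ‖p‖ ^ 2) := by
      gcongr
      · exact le_mul_of_one_le_left (sq_nonneg _) hN
      · exact sum_norm_sq_le_mul_norm_sq_of_overlap (zero_le_one.trans hN) hρ_mem hρ hoverlap hp
    _ = N * (1 + K) * (‖ρ₀‖ ^ 2 + ‖p‖ ^ 2) := by ring

end SubspaceCorrection

/-- Abstract form of the efficiency statement (5.6) of Theorem 5.2 for the
domain decomposition solver of Algorithm 5.2: a stable decomposition of the
error with constant `C` gives `‖e‖² ≤ (1 + C²)(‖ρ_H‖² + ∑_a ‖ρ_a‖²)`, and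
with the finite-overlap property with constant `N`, the estimator satisfies
`β‖e‖ ≤ η` with `β = (N(1 + C²))^{-1/2}`. -/
theorem two_level_estimator_efficiency
    {H : Type*} [NormedAddCommGroup H] [InnerProductSpace ℝ H]
    {ι : Type*} [Fintype ι]
    (V0 VH : Submodule ℝ H) (Va : ι → Submodule ℝ H)
    (hVH : VH ≤ V0) (hVa : ∀ a, Va a ≤ V0)
    (u ui : H)
    (hu : ∀ v ∈ V0, ⟪u, v⟫ = 0)
    (herr : u - ui ∈ V0)
    (ρH : H) (hρHmem : ρH ∈ VH)
    (hρH : ∀ v ∈ VH, ⟪ρH, v⟫ = -⟪ui, v⟫)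
    (uH : H) (huH : uH = ui + ρH)
    (ρa : ι → H) (hρamem : ∀ a, ρa a ∈ Va a)
    (hρa : ∀ a, ∀ v ∈ Va a, ⟪ρa a, v⟫ = -⟪uH, v⟫)
    (ρh : H) (hρh : ρh = ∑ a, ρa a)
    (lamh : ℝ)
    (hlamh : ρh ≠ 0 → lamh = -⟪uH, ρh⟫ / ‖ρh‖ ^ 2)
    (hlamh' : ρh = 0 → lamh = 1)
    (v0 : H) (va : ι → H)
    (hv0 : v0 ∈ VH) (hva : ∀ a, va a ∈ Va a)
    (hdec : u - ui = v0 + ∑ a, va a)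
    (C : ℝ) (hC : 0 < C)
    (hstab : ‖v0‖ ^ 2 + ∑ a, ‖va a‖ ^ 2 ≤ C ^ 2 * ‖u - ui‖ ^ 2) :
    ‖u - ui‖ ^ 2 ≤ (1 + C ^ 2) * (‖ρH‖ ^ 2 + ∑ a, ‖ρa a‖ ^ 2) ∧
    (∀ N : ℝ, 1 ≤ N →
      (∀ x : ι → H, (∀ a, x a ∈ Va a) →
        ‖∑ a, x a‖ ^ 2 ≤ N * ∑ a, ‖x a‖ ^ 2) →
      (Real.sqrt (N * (1 + C ^ 2)))⁻¹ * ‖u - ui‖ ≤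
        Real.sqrt (‖ρH‖ ^ 2 + lamh ^ 2 * ‖ρh‖ ^ 2)) := by
  subst hρh
  have hu_orth : ∀ {W : Submodule ℝ H}, W ≤ V0 → u ∈ Wᗮ := fun hW =>
    (Submodule.mem_orthogonal' _ _).mpr fun v hv => hu v (hW hv)
  have hres : u - ui - ρH = u - uH := by rw [huH, sub_sub]
  have hcoarse : u - ui - ρH ∈ VHᗮ := sub_sub_mem_orthogonal (hu_orth hVH) hρH
  have hlocal : ∀ a, u - ui - ρH - ρa a ∈ (Va a)ᗮ := fun a =>
    hres ▸ sub_sub_mem_orthogonal (hu_orth (hVa a)) (hρa a)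
  have hstab' : ∑ a, ‖va a‖ ^ 2 ≤ C ^ 2 * ‖u - ui‖ ^ 2 :=
    le_of_add_le_of_nonneg_right hstab (sq_nonneg _)
  refine ⟨norm_sq_le_of_stable_decomposition (sq_nonneg C) hv0 hva hdec hcoarse hlocal hstab',
    fun N hN hoverlap => inv_sqrt_mul_le_sqrt (by positivity) ?_⟩
  have hproj : ⟪∑ a, ρa a, lamh • ∑ a, ρa a⟫ = ⟪∑ a, ρa a, u - ui - ρH⟫ := by
    refine inner_smul_self_eq_of_eq_div fun h => ?_
    rw [hres, real_inner_comm, inner_sub_left,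
      hu _ (V0.sum_mem fun a _ => hVa a (hρamem a)), zero_sub]
    exact hlamh h
  rw [← sq_abs lamh, ← Real.norm_eq_abs, ← mul_pow, ← norm_smul]
  exact norm_sq_le_of_stable_decomposition_of_overlap (sq_nonneg C) hN hv0 hva hdec hcoarse
    hρamem hlocal hstab' (hoverlap ρa hρamem) hproj
end

section
/- Under the abstract multilevel solver setup, suppose: (i) the error e := u − u^i decomposes as e = v₀ + Σ_{j=1}^J Σ_{a∈𝒱_j} v_{j,a} with v₀ ∈ V₀⁰, v_{j,a} ∈ V_{j,a}⁰, and ‖v₀‖² + Σ_{j=1}^J Σ_{a∈𝒱_j} ‖v_{j,a}‖² ≤ C_SD² ‖e‖² for some constant C_SD ≥ 1; (ii) there is N ≥ 1 such that for every j ∈ {1,…,J} and all choices x_a ∈ V_{j,a}⁰ (a ∈ 𝒱_j), ‖Σ_a x_a‖² ≤ N Σ_a ‖x_a‖². Then the estimator η := (Σ_{j=0}^J λ_j²‖ρ_j‖²)^{1/2} satisfies ‖e‖ ≤ (J + 2)·√N·C_SD·η. -/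
open RealInnerProductSpace

/-!
Write `e = u - u^i`, so that `e = (u - u_{j-1}) + ∑_{k<j} λ_k ρ_k` for every level `j`, and test it
with the level-`j` part `w_j` of the stable decomposition. The patch corrections `ρ_{j,a}` represent
`u - u_{j-1}` on the patch spaces. The exact line search gives
`∑_a ‖ρ_{j,a}‖² = λ_j ‖ρ_j‖²`, which together with the overlap bound `‖ρ_j‖² ≤ N ∑_a ‖ρ_{j,a}‖²`
yields `∑_a ‖ρ_{j,a}‖² ≤ N ‖λ_j ρ_j‖²`. Hence `⟪e, w_j⟫` is at most `√N ∑_{k≤j} ‖λ_k ρ_k‖` times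
the size of `w_j`. Summing over `j` gives `‖e‖²`, and two applications of the Cauchy–Schwarz
inequality over the `J + 1` levels each cost a factor `√(J + 1)`.
-/

namespace MultilevelEstimator

theorem sum_le_sqrt_card_mul_sqrt_sum_sq {α : Type*} (s : Finset α) (f : α → ℝ) :
    ∑ i ∈ s, f i ≤ √s.card * √(∑ i ∈ s, f i ^ 2) := by
  simpa using Real.sum_mul_le_sqrt_mul_sqrt s 1 f

theorem add_sum_le_sqrt_card_add_one_mul_sqrt {α : Type*} (s : Finset α) (b₀ : ℝ) (b : α → ℝ) :
    b₀ + ∑ i ∈ s, b i ≤ √(s.card + 1) * √(b₀ ^ 2 + ∑ i ∈ s, b i ^ 2) := by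
  simpa using sum_le_sqrt_card_mul_sqrt_sum_sq s.insertNone fun i => i.elim b₀ b

theorem eq_add_sum_range_of_eq_pred_add {M : Type*} [AddCommMonoid M] {x d : ℕ → M} {x₀ : M}
    {n : ℕ} (h_zero : x 0 = x₀ + d 0)
    (h_step : ∀ j ∈ Finset.Icc 1 n, x j = x (j - 1) + d j) {m : ℕ} (hm : m ≤ n) :
    x m = x₀ + ∑ k ∈ Finset.range (m + 1), d k := by
  induction m with
  | zero => simpa using h_zero
  | succ m ih =>
    rw [h_step (m + 1) (Finset.mem_Icc.mpr ⟨by omega, hm⟩), Nat.add_sub_cancel,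
      ih (by omega), Finset.sum_range_succ _ (m + 1), add_assoc]

theorem sub_eq_sub_pred_add_sum_range {M : Type*} [AddCommGroup M] {x d : ℕ → M} {x₀ : M} {n : ℕ}
    (h_zero : x 0 = x₀ + d 0) (h_step : ∀ j ∈ Finset.Icc 1 n, x j = x (j - 1) + d j) (u : M)
    {j : ℕ} (hj : j ∈ Finset.Icc 1 n) :
    u - x₀ = u - x (j - 1) + ∑ k ∈ Finset.range j, d k := by
  obtain ⟨h_pos, h_le⟩ := Finset.mem_Icc.mp hj
  rw [eq_add_sum_range_of_eq_pred_add h_zero h_step (show j - 1 ≤ n by omega),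
    Nat.sub_add_cancel h_pos]
  abel

variable {E : Type*} [NormedAddCommGroup E] [InnerProductSpace ℝ E]

theorem norm_le_of_decomposition_of_inner_le {α : Type*} {s : Finset α} {e w₀ : E} {w : α → E}
    {b₀ K C : ℝ} {b : α → ℝ} (hK : 0 ≤ K) (hC : 0 ≤ C)
    (h_decomp : e = w₀ + ∑ i ∈ s, w i)
    (h_inner₀ : ⟪e, w₀⟫ ≤ K * b₀) (h_inner : ∀ i ∈ s, ⟪e, w i⟫ ≤ K * b i)
    (h_stable : b₀ ^ 2 + ∑ i ∈ s, b i ^ 2 ≤ C ^ 2 * ‖e‖ ^ 2) :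
    ‖e‖ ≤ K * √(s.card + 1) * C := by
  have h_sq : ‖e‖ * ‖e‖ ≤ K * √(s.card + 1) * C * ‖e‖ := calc
    ‖e‖ * ‖e‖ = ⟪e, w₀⟫ + ∑ i ∈ s, ⟪e, w i⟫ := by
      rw [← inner_sum, ← inner_add_right, ← h_decomp, real_inner_self_eq_norm_mul_norm]
    _ ≤ K * b₀ + ∑ i ∈ s, K * b i := add_le_add h_inner₀ (Finset.sum_le_sum h_inner)
    _ = K * (b₀ + ∑ i ∈ s, b i) := by rw [mul_add, Finset.mul_sum]
    _ ≤ K * (√(s.card + 1) * √(b₀ ^ 2 + ∑ i ∈ s, b i ^ 2)) := by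
      gcongr; exact add_sum_le_sqrt_card_add_one_mul_sqrt s b₀ b
    _ ≤ K * (√(s.card + 1) * (C * ‖e‖)) := by
      gcongr; exact Real.sqrt_le_iff.mpr ⟨by positivity, by rwa [mul_pow]⟩
    _ = K * √(s.card + 1) * C * ‖e‖ := by ring
  rcases (norm_nonneg e).eq_or_lt with h_zero | h_pos
  · rw [← h_zero]; positivity
  · exact le_of_mul_le_mul_right h_sq h_pos

theorem norm_le_card_add_one_mul_of_inner_le {α β : Type*} {s : Finset α} {r : Finset β}
    {e w₀ : E} {w : α → E} {b₀ K C : ℝ} {b : α → ℝ} {d : β → E} (h_card : r.card = s.card + 1)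
    (hK : 0 ≤ K) (hC : 0 ≤ C) (h_decomp : e = w₀ + ∑ i ∈ s, w i)
    (h_inner₀ : ⟪e, w₀⟫ ≤ K * (∑ k ∈ r, ‖d k‖) * b₀)
    (h_inner : ∀ i ∈ s, ⟪e, w i⟫ ≤ K * (∑ k ∈ r, ‖d k‖) * b i)
    (h_stable : b₀ ^ 2 + ∑ i ∈ s, b i ^ 2 ≤ C ^ 2 * ‖e‖ ^ 2) :
    ‖e‖ ≤ (s.card + 1) * K * C * √(∑ k ∈ r, ‖d k‖ ^ 2) := by
  have h_sum : ∑ k ∈ r, ‖d k‖ ≤ √(s.card + 1) * √(∑ k ∈ r, ‖d k‖ ^ 2) := by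
    simpa [h_card] using sum_le_sqrt_card_mul_sqrt_sum_sq r fun k => ‖d k‖
  calc ‖e‖ ≤ K * (∑ k ∈ r, ‖d k‖) * √(s.card + 1) * C :=
        norm_le_of_decomposition_of_inner_le (by positivity) hC h_decomp h_inner₀ h_inner h_stable
    _ ≤ K * (√(s.card + 1) * √(∑ k ∈ r, ‖d k‖ ^ 2)) * √(s.card + 1) * C := by gcongr
    _ = (s.card + 1) * K * C * √(∑ k ∈ r, ‖d k‖ ^ 2) := by
      linear_combination K * C * √(∑ k ∈ r, ‖d k‖ ^ 2) *
        Real.mul_self_sqrt (show (0 : ℝ) ≤ s.card + 1 by positivity)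

theorem inner_le_mul_sum_norm_mul_norm_of_inner_eq {β : Type*} {r : Finset β} {d : β → E} {k : β}
    {e v : E} {K : ℝ} (hK : 1 ≤ K) (hk : k ∈ r) (h_inner : ⟪e, v⟫ = ⟪d k, v⟫) :
    ⟪e, v⟫ ≤ K * (∑ i ∈ r, ‖d i‖) * ‖v‖ := calc
  ⟪e, v⟫ ≤ ‖d k‖ * ‖v‖ := h_inner ▸ real_inner_le_norm _ _
  _ ≤ (∑ i ∈ r, ‖d i‖) * ‖v‖ := by
    gcongr; exact Finset.single_le_sum (fun i _ => norm_nonneg (d i)) hk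
  _ ≤ K * (∑ i ∈ r, ‖d i‖) * ‖v‖ := by
    gcongr; exact le_mul_of_one_le_left (by positivity) hK

variable {ι : Type*} {s : Finset ι} {W : ι → Submodule ℝ E} {N lam : ℝ} {z : E} {p x : ι → E}

/-- The patch spaces `W a`, `a ∈ s`, overlap finitely, quantified by the constant `N` in the
almost-orthogonality bound for sums of patch contributions. -/
def FiniteOverlap (s : Finset ι) (W : ι → Submodule ℝ E) (N : ℝ) : Prop :=
  ∀ x : ι → E, (∀ a ∈ s, x a ∈ W a) → ‖∑ a ∈ s, x a‖ ^ 2 ≤ N * ∑ a ∈ s, ‖x a‖ ^ 2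

theorem FiniteOverlap.norm_sum_le (h_overlap : FiniteOverlap s W N) (hx : ∀ a ∈ s, x a ∈ W a) :
    ‖∑ a ∈ s, x a‖ ≤ √N * √(∑ a ∈ s, ‖x a‖ ^ 2) := by
  rw [← Real.sqrt_mul' N (by positivity)]
  exact Real.le_sqrt_of_sq_le (h_overlap x hx)

/-- An additive Schwarz step with exact line search for the error `z`: `p a` is the orthogonal
projection of `z` onto the patch space `W a`, and `lam` is the optimal step length along
`∑ a ∈ s, p a`. The line search is stated without division, so that it leaves `lam` free when the
search direction vanishes. -/
structure IsSchwarzStep (s : Finset ι) (W : ι → Submodule ℝ E) (z : E) (p : ι → E) (lam : ℝ) :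
    Prop where
  mem : ∀ a ∈ s, p a ∈ W a
  inner_eq : ∀ a ∈ s, ∀ v ∈ W a, ⟪p a, v⟫ = ⟪z, v⟫
  line_search : lam * ‖∑ a ∈ s, p a‖ ^ 2 = ⟪z, ∑ a ∈ s, p a⟫

namespace IsSchwarzStep

theorem of_residual {u y : E} (hu : ∀ a ∈ s, ∀ v ∈ W a, ⟪u, v⟫ = 0)
    (h_mem : ∀ a ∈ s, p a ∈ W a) (h_residual : ∀ a ∈ s, ∀ v ∈ W a, ⟪p a, v⟫ = -⟪y, v⟫)
    (h_lam : ∑ a ∈ s, p a ≠ 0 → lam = -⟪y, ∑ a ∈ s, p a⟫ / ‖∑ a ∈ s, p a‖ ^ 2) :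
    IsSchwarzStep s W (u - y) p lam where
  mem := h_mem
  inner_eq a ha v hv := by rw [h_residual a ha v hv, inner_sub_left, hu a ha v hv, zero_sub]
  line_search := by
    have hu_sum : ⟪u, ∑ a ∈ s, p a⟫ = 0 := by
      rw [inner_sum]
      exact Finset.sum_eq_zero fun a ha => hu a ha _ (h_mem a ha)
    rw [inner_sub_left, hu_sum, zero_sub]
    by_cases h_zero : ∑ a ∈ s, p a = 0
    · simp [h_zero]
    · rw [h_lam h_zero, div_mul_cancel₀ _ (by positivity)]

theorem inner_sum_eq (h : IsSchwarzStep s W z p lam) (hx : ∀ a ∈ s, x a ∈ W a) :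
    ⟪z, ∑ a ∈ s, x a⟫ = ∑ a ∈ s, ⟪p a, x a⟫ := by
  rw [inner_sum]
  exact Finset.sum_congr rfl fun a ha => (h.inner_eq a ha _ (hx a ha)).symm

theorem sum_norm_sq_eq (h : IsSchwarzStep s W z p lam) :
    ∑ a ∈ s, ‖p a‖ ^ 2 = lam * ‖∑ a ∈ s, p a‖ ^ 2 := by
  rw [h.line_search, h.inner_sum_eq h.mem]
  simp only [real_inner_self_eq_norm_sq]

theorem sum_norm_sq_le (h : IsSchwarzStep s W z p lam) (h_overlap : FiniteOverlap s W N) :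
    ∑ a ∈ s, ‖p a‖ ^ 2 ≤ N * ‖lam • ∑ a ∈ s, p a‖ ^ 2 := by
  have h_eq := h.sum_norm_sq_eq
  have h_le := h_overlap p h.mem
  set S := ∑ a ∈ s, ‖p a‖ ^ 2
  set q := ∑ a ∈ s, p a
  have hS : 0 ≤ S := by positivity
  rw [norm_smul, mul_pow, Real.norm_eq_abs, sq_abs]
  rcases hS.eq_or_lt with h_zero | h_pos
  · have hq : ‖q‖ ^ 2 = 0 := le_antisymm (by simpa [← h_zero] using h_le) (sq_nonneg _)
    simp [← h_zero, hq]
  · refine le_of_mul_le_mul_right ?_ h_pos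
    calc S * S = lam ^ 2 * ‖q‖ ^ 2 * ‖q‖ ^ 2 := by rw [h_eq]; ring
      _ ≤ lam ^ 2 * ‖q‖ ^ 2 * (N * S) := by gcongr
      _ = N * (lam ^ 2 * ‖q‖ ^ 2) * S := by ring

theorem inner_sum_le (h : IsSchwarzStep s W z p lam) (h_overlap : FiniteOverlap s W N)
    (hx : ∀ a ∈ s, x a ∈ W a) :
    ⟪z, ∑ a ∈ s, x a⟫ ≤ √N * ‖lam • ∑ a ∈ s, p a‖ * √(∑ a ∈ s, ‖x a‖ ^ 2) := calc
  ⟪z, ∑ a ∈ s, x a⟫ = ∑ a ∈ s, ⟪p a, x a⟫ := h.inner_sum_eq hx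
  _ ≤ ∑ a ∈ s, ‖p a‖ * ‖x a‖ := Finset.sum_le_sum fun a _ => real_inner_le_norm _ _
  _ ≤ √(∑ a ∈ s, ‖p a‖ ^ 2) * √(∑ a ∈ s, ‖x a‖ ^ 2) := Real.sum_mul_le_sqrt_mul_sqrt _ _ _
  _ ≤ √(N * ‖lam • ∑ a ∈ s, p a‖ ^ 2) * √(∑ a ∈ s, ‖x a‖ ^ 2) := by
    gcongr; exact h.sum_norm_sq_le h_overlap
  _ = √N * ‖lam • ∑ a ∈ s, p a‖ * √(∑ a ∈ s, ‖x a‖ ^ 2) := by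
    rw [Real.sqrt_mul' N (sq_nonneg _), Real.sqrt_sq (norm_nonneg _)]

theorem inner_add_sum_range_le (h : IsSchwarzStep s W z p lam) (h_overlap : FiniteOverlap s W N)
    (hx : ∀ a ∈ s, x a ∈ W a) {d : ℕ → E} {j n : ℕ} (h_d : d j = lam • ∑ a ∈ s, p a) (hj : j < n) :
    ⟪z + ∑ k ∈ Finset.range j, d k, ∑ a ∈ s, x a⟫ ≤
      √N * (∑ k ∈ Finset.range n, ‖d k‖) * √(∑ a ∈ s, ‖x a‖ ^ 2) := by
  have h_z : ⟪z, ∑ a ∈ s, x a⟫ ≤ √N * ‖d j‖ * √(∑ a ∈ s, ‖x a‖ ^ 2) :=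
    h_d ▸ h.inner_sum_le h_overlap hx
  have h_prev : ⟪∑ k ∈ Finset.range j, d k, ∑ a ∈ s, x a⟫ ≤
      (∑ k ∈ Finset.range j, ‖d k‖) * (√N * √(∑ a ∈ s, ‖x a‖ ^ 2)) :=
    (real_inner_le_norm _ _).trans
      (by gcongr; exacts [norm_sum_le _ _, h_overlap.norm_sum_le hx])
  calc ⟪z + ∑ k ∈ Finset.range j, d k, ∑ a ∈ s, x a⟫
      ≤ √N * (∑ k ∈ Finset.range (j + 1), ‖d k‖) * √(∑ a ∈ s, ‖x a‖ ^ 2) := by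
        rw [inner_add_left, Finset.sum_range_succ]
        linarith
    _ ≤ √N * (∑ k ∈ Finset.range n, ‖d k‖) * √(∑ a ∈ s, ‖x a‖ ^ 2) := by
        gcongr
        exact hj

end IsSchwarzStep

end MultilevelEstimator

open MultilevelEstimator

/-- Abstract form of the efficiency statement (5.6) of Theorem 5.2 for the
multigrid solver of Algorithm 4.1, with explicit constant growing linearly in
the number of levels `J`: from a multilevel stable decomposition of the error
with constant `C_SD` and the finite-overlap bound with constant `N`, one has
`‖e‖ ≤ (J + 2)·√N·C_SD·η`. -/
theorem multigrid_estimator_efficiency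
    {H : Type*} [NormedAddCommGroup H] [InnerProductSpace ℝ H]
    (J : ℕ) {ι : Type*} (𝒱 : ℕ → Finset ι)
    (V0 Vc : Submodule ℝ H) (Vloc : ℕ → ι → Submodule ℝ H)
    (hVc : Vc ≤ V0)
    (hVloc : ∀ j ∈ Finset.Icc 1 J, ∀ a ∈ 𝒱 j, Vloc j a ≤ V0)
    (u ui : H)
    (hu : ∀ v ∈ V0, ⟪u, v⟫ = 0)
    (herr : u - ui ∈ V0)
    (ρ : ℕ → H) (ρloc : ℕ → ι → H) (lam : ℕ → ℝ) (uu : ℕ → H)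
    (hρ0mem : ρ 0 ∈ Vc)
    (hρ0 : ∀ v ∈ Vc, ⟪ρ 0, v⟫ = -⟪ui, v⟫)
    (hlam0 : lam 0 = 1)
    (huu0 : uu 0 = ui + lam 0 • ρ 0)
    (hρlocmem : ∀ j ∈ Finset.Icc 1 J, ∀ a ∈ 𝒱 j, ρloc j a ∈ Vloc j a)
    (hρloc : ∀ j ∈ Finset.Icc 1 J, ∀ a ∈ 𝒱 j, ∀ v ∈ Vloc j a,
      ⟪ρloc j a, v⟫ = -⟪uu (j - 1), v⟫)
    (hρj : ∀ j ∈ Finset.Icc 1 J, ρ j = ∑ a ∈ 𝒱 j, ρloc j a)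
    (hlamj : ∀ j ∈ Finset.Icc 1 J, ρ j ≠ 0 →
      lam j = -⟪uu (j - 1), ρ j⟫ / ‖ρ j‖ ^ 2)
    (hlamj' : ∀ j ∈ Finset.Icc 1 J, ρ j = 0 → lam j = 1)
    (huuj : ∀ j ∈ Finset.Icc 1 J, uu j = uu (j - 1) + lam j • ρ j)
    (v0 : H) (vja : ℕ → ι → H)
    (hv0 : v0 ∈ Vc)
    (hvja : ∀ j ∈ Finset.Icc 1 J, ∀ a ∈ 𝒱 j, vja j a ∈ Vloc j a)
    (hdec : u - ui = v0 + ∑ j ∈ Finset.Icc 1 J, ∑ a ∈ 𝒱 j, vja j a)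
    (CSD : ℝ) (hCSD : 1 ≤ CSD)
    (hstab : ‖v0‖ ^ 2 + ∑ j ∈ Finset.Icc 1 J, ∑ a ∈ 𝒱 j, ‖vja j a‖ ^ 2 ≤
      CSD ^ 2 * ‖u - ui‖ ^ 2)
    (N : ℝ) (hN : 1 ≤ N)
    (hover : ∀ j ∈ Finset.Icc 1 J, ∀ x : ι → H,
      (∀ a ∈ 𝒱 j, x a ∈ Vloc j a) →
      ‖∑ a ∈ 𝒱 j, x a‖ ^ 2 ≤ N * ∑ a ∈ 𝒱 j, ‖x a‖ ^ 2) :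
    ‖u - ui‖ ≤ ((J : ℝ) + 2) * Real.sqrt N * CSD *
      Real.sqrt (∑ j ∈ Finset.range (J + 1), lam j ^ 2 * ‖ρ j‖ ^ 2) := by
  have h_coarse : ⟪u - ui, v0⟫ ≤ √N * (∑ k ∈ Finset.range (J + 1), ‖lam k • ρ k‖) * ‖v0‖ := by
    refine inner_le_mul_sum_norm_mul_norm_of_inner_eq (Real.one_le_sqrt.mpr hN)
      (Finset.mem_range.mpr J.succ_pos) ?_
    rw [hlam0, one_smul, hρ0 v0 hv0, inner_sub_left, hu v0 (hVc hv0), zero_sub]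
  have h_level : ∀ j ∈ Finset.Icc 1 J, ⟪u - ui, ∑ a ∈ 𝒱 j, vja j a⟫ ≤
      √N * (∑ k ∈ Finset.range (J + 1), ‖lam k • ρ k‖) * √(∑ a ∈ 𝒱 j, ‖vja j a‖ ^ 2) := by
    intro j hj
    have h_step : IsSchwarzStep (𝒱 j) (Vloc j) (u - uu (j - 1)) (ρloc j) (lam j) :=
      .of_residual (fun a ha v hv => hu v (hVloc j hj a ha hv)) (hρlocmem j hj) (hρloc j hj)
        (hρj j hj ▸ hlamj j hj)
    rw [sub_eq_sub_pred_add_sum_range huu0 huuj u hj]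
    exact h_step.inner_add_sum_range_le (hover j hj) (hvja j hj) (by rw [hρj j hj])
      (Nat.lt_succ_of_le (Finset.mem_Icc.mp hj).2)
  calc ‖u - ui‖ ≤ (J + 1) * √N * CSD * √(∑ j ∈ Finset.range (J + 1), lam j ^ 2 * ‖ρ j‖ ^ 2) := by
        simpa [norm_smul, mul_pow] using norm_le_card_add_one_mul_of_inner_le (by simp)
          (Real.sqrt_nonneg N) (zero_le_one.trans hCSD) hdec h_coarse h_level
          (by simpa [Real.sq_sqrt, Finset.sum_nonneg, sq_nonneg] using hstab)
    _ ≤ (J + 2) * √N * CSD * √(∑ j ∈ Finset.range (J + 1), lam j ^ 2 * ‖ρ j‖ ^ 2) := by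
        gcongr; norm_num
end

section
/- Under the abstract two-level solver setup, suppose the error e := u − u^i admits a decomposition e = v₀ + Σ_{a∈𝒱_H} v_a with v₀ ∈ V_H⁰, v_a ∈ V_a⁰, and ‖v₀‖² + Σ_a ‖v_a‖² ≤ C² ‖e‖² for some C > 0, and suppose N ≥ 1 is such that ‖Σ_{a∈𝒱_H} x_a‖² ≤ N Σ_{a∈𝒱_H} ‖x_a‖² for all choices x_a ∈ V_a⁰. Then the new iterate u^{i+1} := u_H + λ_hρ_h contracts the error: ‖u − u^{i+1}‖ ≤ α ‖u − u^i‖ with α = √(1 − 1/(N(1 + C²))) < 1. -/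
open RealInnerProductSpace

/-!
Every correction computed by the solver is an orthogonal projection of the current error: `ρ_H` of
`e = u - u^i` onto the coarse space, `ρ_a` of `x = e - ρ_H` onto the subdomain spaces and, by the
choice of `λ_h`, also `λ_h ρ_h` of `x` onto the line spanned by `ρ_h`. Pythagoras applied twice
gives `‖u - u^{i+1}‖² = ‖e‖² - ‖ρ_H‖² - ‖λ_h ρ_h‖²`, so it suffices to bound the two corrections
from below by a multiple of `‖e‖²`. Testing `x` with a decomposition of `e` yields
`‖e‖² ≤ ‖ρ_H‖² + Σ ‖ρ_a‖ ‖v_a‖`; as `‖ρ_H‖ ≤ ‖e‖`, Cauchy-Schwarz turns this into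
`‖e‖² ≤ (1 + C²) (‖ρ_H‖² + Σ ‖ρ_a‖²)`. Finally `Σ ‖ρ_a‖² = ⟪x, ρ_h⟫ = ⟪λ_h ρ_h, ρ_h⟫`, which
together with the overlap bound on `‖ρ_h‖` gives `Σ ‖ρ_a‖² ≤ N ‖λ_h ρ_h‖²`.
-/

section GalerkinProjection

open scoped InnerProductSpace

variable {𝕜 H : Type*} [RCLike 𝕜] [NormedAddCommGroup H] [InnerProductSpace 𝕜 H]
  {ι : Type*} [Fintype ι]

/-- `ρ` is the Galerkin (orthogonal) projection of `x` onto `W`. This is a relation rather than a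
function of `x` because `W` is not assumed complete, so that a projection need not exist; Mathlib's
`Submodule.starProjection` is not available for such `W`. -/
structure IsGalerkinProjection (W : Submodule 𝕜 H) (x ρ : H) : Prop where
  mem : ρ ∈ W
  sub_mem_orthogonal : x - ρ ∈ Wᗮ

namespace IsGalerkinProjection

theorem of_inner_eq_neg_inner {W : Submodule 𝕜 H} {u w ρ : H} (hu : u ∈ Wᗮ) (hρ : ρ ∈ W)
    (h : ∀ v ∈ W, ⟪ρ, v⟫_𝕜 = -⟪w, v⟫_𝕜) : IsGalerkinProjection W (u - w) ρ where
  mem := hρ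
  sub_mem_orthogonal := (W.mem_orthogonal' _).mpr fun v hv => by
    simp [inner_sub_left, W.inner_left_of_mem_orthogonal hv hu, h v hv]

theorem span_singleton {x d : H} {c : 𝕜} (hc : d ≠ 0 → c = ⟪d, x⟫_𝕜 / (‖d‖ : 𝕜) ^ 2) :
    IsGalerkinProjection (𝕜 ∙ d) x (c • d) where
  mem := Submodule.smul_mem _ _ (Submodule.mem_span_singleton_self d)
  sub_mem_orthogonal := by
    rw [Submodule.mem_orthogonal_singleton_iff_inner_right]
    rcases eq_or_ne d 0 with rfl | hd
    · exact inner_zero_left _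
    · have hd' : (‖d‖ : 𝕜) ≠ 0 := by simpa using hd
      rw [inner_sub_right, inner_smul_right, inner_self_eq_norm_sq_to_K, hc hd]
      field_simp
      ring

theorem inner_eq {W : Submodule 𝕜 H} {x ρ v : H} (h : IsGalerkinProjection W x ρ) (hv : v ∈ W) :
    ⟪ρ, v⟫_𝕜 = ⟪x, v⟫_𝕜 := by
  have horth := W.inner_left_of_mem_orthogonal hv h.sub_mem_orthogonal
  rw [inner_sub_left, sub_eq_zero] at horth
  exact horth.symm

theorem norm_sq_eq_add {W : Submodule 𝕜 H} {x ρ : H} (h : IsGalerkinProjection W x ρ) :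
    ‖x‖ ^ 2 = ‖ρ‖ ^ 2 + ‖x - ρ‖ ^ 2 := by
  have horth := W.inner_right_of_mem_orthogonal h.mem h.sub_mem_orthogonal
  simpa [horth] using norm_add_sq (𝕜 := 𝕜) ρ (x - ρ)

theorem sum_norm_sq_eq_re_inner_sum {W : ι → Submodule 𝕜 H} {x : H} {ρ : ι → H}
    (hρ : ∀ a, IsGalerkinProjection (W a) x (ρ a)) :
    ∑ a, ‖ρ a‖ ^ 2 = RCLike.re ⟪x, ∑ a, ρ a⟫_𝕜 := by
  simp_rw [inner_sum, map_sum, ← (hρ _).inner_eq (hρ _).mem, inner_self_eq_norm_sq]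

theorem sum_norm_sq_le_mul_norm_sq {W : ι → Submodule 𝕜 H} {K : Submodule 𝕜 H} {x δ : H}
    {ρ : ι → H} {N : ℝ} (hρ : ∀ a, IsGalerkinProjection (W a) x (ρ a))
    (hδ : IsGalerkinProjection K x δ) (hK : ∑ a, ρ a ∈ K) (hN : 0 ≤ N)
    (hoverlap : ‖∑ a, ρ a‖ ^ 2 ≤ N * ∑ a, ‖ρ a‖ ^ 2) :
    ∑ a, ‖ρ a‖ ^ 2 ≤ N * ‖δ‖ ^ 2 := by
  have hsum_nonneg : 0 ≤ ∑ a, ‖ρ a‖ ^ 2 := by positivity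
  have hsum_le : ∑ a, ‖ρ a‖ ^ 2 ≤ ‖δ‖ * ‖∑ a, ρ a‖ := by
    rw [sum_norm_sq_eq_re_inner_sum hρ, ← hδ.inner_eq hK]
    exact re_inner_le_norm _ _
  have hsq : (∑ a, ‖ρ a‖ ^ 2) * ∑ a, ‖ρ a‖ ^ 2 ≤ (∑ a, ‖ρ a‖ ^ 2) * (N * ‖δ‖ ^ 2) :=
    calc (∑ a, ‖ρ a‖ ^ 2) * ∑ a, ‖ρ a‖ ^ 2
        ≤ (‖δ‖ * ‖∑ a, ρ a‖) * (‖δ‖ * ‖∑ a, ρ a‖) := by gcongr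
      _ = ‖δ‖ ^ 2 * ‖∑ a, ρ a‖ ^ 2 := by ring
      _ ≤ ‖δ‖ ^ 2 * (N * ∑ a, ‖ρ a‖ ^ 2) := by gcongr
      _ = (∑ a, ‖ρ a‖ ^ 2) * (N * ‖δ‖ ^ 2) := by ring
  rcases hsum_nonneg.eq_or_lt with hzero | hpos
  · rw [← hzero]
    positivity
  · exact le_of_mul_le_mul_left hsq hpos

theorem norm_sq_le_norm_sq_add_sum_norm_mul_norm {W₀ : Submodule 𝕜 H} {W : ι → Submodule 𝕜 H}
    {e ρ₀ : H} {ρ v : ι → H} (hρ₀ : IsGalerkinProjection W₀ e ρ₀)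
    (hρ : ∀ a, IsGalerkinProjection (W a) (e - ρ₀) (ρ a)) (hv : ∀ a, v a ∈ W a)
    (hdec : e - ∑ a, v a ∈ W₀) :
    ‖e‖ ^ 2 ≤ ‖ρ₀‖ ^ 2 + ∑ a, ‖ρ a‖ * ‖v a‖ := by
  have hcoarse : ⟪e - ρ₀, (e - ∑ a, v a) - ρ₀⟫_𝕜 = 0 :=
    W₀.inner_left_of_mem_orthogonal (W₀.sub_mem hdec hρ₀.mem) hρ₀.sub_mem_orthogonal
  have htest : ⟪e - ρ₀, e - ρ₀⟫_𝕜 = ∑ a, ⟪ρ a, v a⟫_𝕜 := by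
    rw [sub_right_comm, inner_sub_right, sub_eq_zero, inner_sum] at hcoarse
    simp_rw [hcoarse, (hρ _).inner_eq (hv _)]
  rw [hρ₀.norm_sq_eq_add, ← inner_self_eq_norm_sq (𝕜 := 𝕜) (e - ρ₀), htest, map_sum]
  gcongr with a
  exact re_inner_le_norm _ _

theorem norm_sq_le_of_stable_decomposition {W₀ : Submodule 𝕜 H} {W : ι → Submodule 𝕜 H}
    {e ρ₀ : H} {ρ v : ι → H} {C : ℝ} (hρ₀ : IsGalerkinProjection W₀ e ρ₀)
    (hρ : ∀ a, IsGalerkinProjection (W a) (e - ρ₀) (ρ a)) (hv : ∀ a, v a ∈ W a)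
    (hdec : e - ∑ a, v a ∈ W₀) (hstab : ∑ a, ‖v a‖ ^ 2 ≤ C ^ 2 * ‖e‖ ^ 2) :
    ‖e‖ ^ 2 ≤ (1 + C ^ 2) * (‖ρ₀‖ ^ 2 + ∑ a, ‖ρ a‖ ^ 2) := by
  have hρ₀_le : ‖ρ₀‖ ^ 2 ≤ ‖e‖ ^ 2 := by
    rw [hρ₀.norm_sq_eq_add]
    exact le_add_of_nonneg_right (sq_nonneg _)
  have hcauchy : (‖ρ₀‖ ^ 2 + ∑ a, ‖ρ a‖ * ‖v a‖) ^ 2 ≤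
      (‖ρ₀‖ ^ 2 + ∑ a, ‖ρ a‖ ^ 2) * (‖ρ₀‖ ^ 2 + ∑ a, ‖v a‖ ^ 2) := by
    simpa [Fintype.sum_option, ← sq] using Finset.sum_mul_sq_le_sq_mul_sq Finset.univ
      (fun o : Option ι => o.elim ‖ρ₀‖ fun a => ‖ρ a‖)
      (fun o : Option ι => o.elim ‖ρ₀‖ fun a => ‖v a‖)
  have hsq : ‖e‖ ^ 2 * ‖e‖ ^ 2 ≤ ‖e‖ ^ 2 * ((1 + C ^ 2) * (‖ρ₀‖ ^ 2 + ∑ a, ‖ρ a‖ ^ 2)) :=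
    calc ‖e‖ ^ 2 * ‖e‖ ^ 2
        = (‖e‖ ^ 2) ^ 2 := by ring
      _ ≤ (‖ρ₀‖ ^ 2 + ∑ a, ‖ρ a‖ * ‖v a‖) ^ 2 := by
          gcongr
          exact norm_sq_le_norm_sq_add_sum_norm_mul_norm hρ₀ hρ hv hdec
      _ ≤ (‖ρ₀‖ ^ 2 + ∑ a, ‖ρ a‖ ^ 2) * (‖ρ₀‖ ^ 2 + ∑ a, ‖v a‖ ^ 2) := hcauchy
      _ ≤ (‖ρ₀‖ ^ 2 + ∑ a, ‖ρ a‖ ^ 2) * (‖e‖ ^ 2 + C ^ 2 * ‖e‖ ^ 2) := by gcongr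
      _ = ‖e‖ ^ 2 * ((1 + C ^ 2) * (‖ρ₀‖ ^ 2 + ∑ a, ‖ρ a‖ ^ 2)) := by ring
  rcases (sq_nonneg ‖e‖).eq_or_lt with hzero | hpos
  · rw [← hzero]
    positivity
  · exact le_of_mul_le_mul_left hsq hpos

theorem norm_sub_sub_le_of_norm_sq_le {W₀ K : Submodule 𝕜 H} {e ρ₀ δ : H} {M : ℝ} (hM : 0 < M)
    (hρ₀ : IsGalerkinProjection W₀ e ρ₀) (hδ : IsGalerkinProjection K (e - ρ₀) δ)
    (hefficiency : ‖e‖ ^ 2 ≤ M * (‖ρ₀‖ ^ 2 + ‖δ‖ ^ 2)) :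
    ‖e - ρ₀ - δ‖ ≤ √(1 - 1 / M) * ‖e‖ := by
  have hpythagoras : ‖e‖ ^ 2 = ‖ρ₀‖ ^ 2 + (‖δ‖ ^ 2 + ‖e - ρ₀ - δ‖ ^ 2) := by
    rw [hρ₀.norm_sq_eq_add, hδ.norm_sq_eq_add]
  have hdiv : ‖e‖ ^ 2 / M ≤ ‖ρ₀‖ ^ 2 + ‖δ‖ ^ 2 := (div_le_iff₀' hM).mpr hefficiency
  rw [← Real.sqrt_sq (norm_nonneg e), ← Real.sqrt_mul' _ (sq_nonneg _)]
  refine Real.le_sqrt_of_sq_le ?_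
  calc ‖e - ρ₀ - δ‖ ^ 2 ≤ ‖e‖ ^ 2 - ‖e‖ ^ 2 / M := by linarith
    _ = (1 - 1 / M) * ‖e‖ ^ 2 := by ring

end IsGalerkinProjection

theorem two_level_error_contraction_general
    (VH : Submodule 𝕜 H) (Va : ι → Submodule 𝕜 H)
    (u ui : H) (huVH : u ∈ VHᗮ) (huVa : ∀ a, u ∈ (Va a)ᗮ)
    (ρH : H) (hρHmem : ρH ∈ VH)
    (hρH : ∀ v ∈ VH, ⟪ρH, v⟫_𝕜 = -⟪ui, v⟫_𝕜)
    (uH : H) (huH : uH = ui + ρH)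
    (ρa : ι → H) (hρamem : ∀ a, ρa a ∈ Va a)
    (hρa : ∀ a, ∀ v ∈ Va a, ⟪ρa a, v⟫_𝕜 = -⟪uH, v⟫_𝕜)
    (ρh : H) (hρh : ρh = ∑ a, ρa a)
    (lamh : 𝕜) (hlamh : ρh ≠ 0 → lamh = -⟪ρh, uH⟫_𝕜 / (‖ρh‖ : 𝕜) ^ 2)
    (va : ι → H) (hva : ∀ a, va a ∈ Va a) (hdec : u - ui - ∑ a, va a ∈ VH)
    (C : ℝ) (hstab : ∑ a, ‖va a‖ ^ 2 ≤ C ^ 2 * ‖u - ui‖ ^ 2)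
    (N : ℝ) (hN : 1 ≤ N) (hover : ‖∑ a, ρa a‖ ^ 2 ≤ N * ∑ a, ‖ρa a‖ ^ 2) :
    ‖u - (uH + lamh • ρh)‖ ≤ √(1 - 1 / (N * (1 + C ^ 2))) * ‖u - ui‖ ∧
      √(1 - 1 / (N * (1 + C ^ 2))) < 1 := by
  have hM : 0 < N * (1 + C ^ 2) := by positivity
  refine ⟨?_, (Real.sqrt_lt' one_pos).mpr <|
    (sub_lt_self 1 (one_div_pos.mpr hM)).trans_eq (one_pow 2).symm⟩
  have hx : u - uH = u - ui - ρH := by rw [huH, sub_add_eq_sub_sub]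
  have hcoarse : IsGalerkinProjection VH (u - ui) ρH := .of_inner_eq_neg_inner huVH hρHmem hρH
  have hlocal (a : ι) : IsGalerkinProjection (Va a) (u - ui - ρH) (ρa a) :=
    hx ▸ .of_inner_eq_neg_inner (huVa a) (hρamem a) (hρa a)
  have huρh : ⟪ρh, u⟫_𝕜 = 0 := by
    rw [hρh, sum_inner]
    exact Finset.sum_eq_zero fun a _ => (huVa a) _ (hρamem a)
  have hline : IsGalerkinProjection (𝕜 ∙ ρh) (u - ui - ρH) (lamh • ρh) :=
    .span_singleton fun h => by rw [hlamh h, ← hx, inner_sub_right, huρh, zero_sub]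
  rw [sub_add_eq_sub_sub, hx]
  refine IsGalerkinProjection.norm_sub_sub_le_of_norm_sq_le hM hcoarse hline ?_
  calc ‖u - ui‖ ^ 2 ≤ (1 + C ^ 2) * (‖ρH‖ ^ 2 + ∑ a, ‖ρa a‖ ^ 2) :=
        IsGalerkinProjection.norm_sq_le_of_stable_decomposition hcoarse hlocal hva hdec hstab
    _ ≤ (1 + C ^ 2) * (N * ‖ρH‖ ^ 2 + N * ‖lamh • ρh‖ ^ 2) := by
        gcongr
        · exact le_mul_of_one_le_left (sq_nonneg _) hN
        · exact IsGalerkinProjection.sum_norm_sq_le_mul_norm_sq hlocal hline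
            (hρh ▸ Submodule.mem_span_singleton_self _) (by positivity) hover
    _ = N * (1 + C ^ 2) * (‖ρH‖ ^ 2 + ‖lamh • ρh‖ ^ 2) := by ring

end GalerkinProjection

/-- Abstract form of Theorem 5.3 (error contraction) for the domain
decomposition solver of Algorithm 5.2 with explicit contraction factor: under
a stable decomposition of the error with constant `C` and the finite-overlap
bound with constant `N`, the new iterate `u^{i+1} = u_H + λ_h ρ_h` satisfies
`‖u - u^{i+1}‖ ≤ α ‖u - u^i‖` with `α = √(1 - 1/(N(1 + C²))) < 1`. -/
theorem two_level_error_contraction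
    {H : Type*} [NormedAddCommGroup H] [InnerProductSpace ℝ H]
    {ι : Type*} [Fintype ι]
    (V0 VH : Submodule ℝ H) (Va : ι → Submodule ℝ H)
    (hVH : VH ≤ V0) (hVa : ∀ a, Va a ≤ V0)
    (u ui : H)
    (hu : ∀ v ∈ V0, ⟪u, v⟫ = 0)
    (herr : u - ui ∈ V0)
    (ρH : H) (hρHmem : ρH ∈ VH)
    (hρH : ∀ v ∈ VH, ⟪ρH, v⟫ = -⟪ui, v⟫)
    (uH : H) (huH : uH = ui + ρH)
    (ρa : ι → H) (hρamem : ∀ a, ρa a ∈ Va a)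
    (hρa : ∀ a, ∀ v ∈ Va a, ⟪ρa a, v⟫ = -⟪uH, v⟫)
    (ρh : H) (hρh : ρh = ∑ a, ρa a)
    (lamh : ℝ)
    (hlamh : ρh ≠ 0 → lamh = -⟪uH, ρh⟫ / ‖ρh‖ ^ 2)
    (hlamh' : ρh = 0 → lamh = 1)
    (v0 : H) (va : ι → H)
    (hv0 : v0 ∈ VH) (hva : ∀ a, va a ∈ Va a)
    (hdec : u - ui = v0 + ∑ a, va a)
    (C : ℝ) (hC : 0 < C)
    (hstab : ‖v0‖ ^ 2 + ∑ a, ‖va a‖ ^ 2 ≤ C ^ 2 * ‖u - ui‖ ^ 2)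
    (N : ℝ) (hN : 1 ≤ N)
    (hover : ∀ x : ι → H, (∀ a, x a ∈ Va a) →
      ‖∑ a, x a‖ ^ 2 ≤ N * ∑ a, ‖x a‖ ^ 2) :
    ‖u - (uH + lamh • ρh)‖ ≤
      Real.sqrt (1 - 1 / (N * (1 + C ^ 2))) * ‖u - ui‖ ∧
    Real.sqrt (1 - 1 / (N * (1 + C ^ 2))) < 1 := by
  have huV0 : u ∈ V0ᗮ := (V0.mem_orthogonal' u).mpr hu
  exact two_level_error_contraction_general VH Va u ui (Submodule.orthogonal_le hVH huV0)
    (fun a => Submodule.orthogonal_le (hVa a) huV0) ρH hρHmem hρH uH huH ρa hρamem hρa ρh hρh lamh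
    (by simpa [real_inner_comm] using hlamh) va hva (by simpa [hdec] using hv0) C
    ((le_add_of_nonneg_left (sq_nonneg _)).trans hstab) N hN (hover ρa hρamem)
end

section
/- Under the abstract multilevel solver setup, suppose: (i) the error e := u − u^i decomposes as e = v₀ + Σ_{j=1}^J Σ_{a∈𝒱_j} v_{j,a} with v₀ ∈ V₀⁰, v_{j,a} ∈ V_{j,a}⁰, and ‖v₀‖² + Σ_{j=1}^J Σ_{a∈𝒱_j} ‖v_{j,a}‖² ≤ C_SD² ‖e‖² for some C_SD ≥ 1; (ii) there is N ≥ 1 such that for every j ∈ {1,…,J} and all choices x_a ∈ V_{j,a}⁰, ‖Σ_a x_a‖² ≤ N Σ_a ‖x_a‖². Then the new iterate u^{i+1} := u_J contracts the error: ‖u − u^{i+1}‖ ≤ α‖u − u^i‖ with α = √(1 − 1/(N·C_SD²·(J+2)²)) < 1. -/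
open RealInnerProductSpace

/-!
Measured by its error, the coarse solve is one more level: every level replaces the error `e` by
`e'`, its component orthogonal to the sum `ρ` of the local Riesz representatives `r a` of `e`.

*One level.* Pythagoras gives `‖e - e'‖² + ‖e'‖² = ‖e‖²`. Moreover
`∑ ‖r a‖² = ⟪ρ, e⟫ = ⟪ρ, e - e'⟫ ≤ ‖ρ‖ ‖e - e'‖`, and the overlap bound for `ρ` turns this into
`∑ ‖r a‖² ≤ N ‖e - e'‖²`: the length of the step controls the local residuals.

*All levels.* Pair the initial error with its stable decomposition. On level `k` it differs from
the current error by the earlier steps, so each pairing is bounded by the total length of the steps;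
two applications of Cauchy–Schwarz over the `n = J + 1` levels give
`‖e 0‖² ≤ N C² n² ∑ ‖e k - e (k + 1)‖²`, where the last sum telescopes to `‖e 0‖² - ‖e n‖²`.
-/

lemma sum_le_sqrt_card_mul_sqrt_sum_sq {κ : Type*} (t : Finset κ) (f : κ → ℝ) :
    ∑ k ∈ t, f k ≤ √t.card * √(∑ k ∈ t, f k ^ 2) := by
  simpa using Real.sum_mul_le_sqrt_mul_sqrt t 1 f

lemma sum_Icc_one_eq_sum_range {M : Type*} [AddCommMonoid M] (f : ℕ → M) (n : ℕ) :
    ∑ j ∈ Finset.Icc 1 n, f j = ∑ k ∈ Finset.range n, f (k + 1) := by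
  simpa only [Finset.Ico_add_one_right_eq_Icc, Nat.add_sub_cancel, Nat.add_comm 1] using
    Finset.sum_Ico_eq_sum_range f 1 (n + 1)

lemma sqrt_one_sub_one_div_lt_one {K : ℝ} (hK : 0 < K) : √(1 - 1 / K) < 1 := by
  rw [Real.sqrt_lt' one_pos, one_pow, sub_lt_self_iff]
  exact one_div_pos.2 hK

section Schwarz

open scoped InnerProductSpace

variable {𝕜 E ι : Type*} [RCLike 𝕜] [SeminormedAddCommGroup E] [InnerProductSpace 𝕜 E]

/-- The squared norm of a sum of local contributions from the patch spaces `V a`, `a ∈ s`, is at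
most `N` times the sum of their squared norms: the abstract form of finite overlap of the patches.
-/
def HasOverlapBound (s : Finset ι) (V : ι → Submodule 𝕜 E) (N : ℝ) : Prop :=
  ∀ x : ι → E, (∀ a ∈ s, x a ∈ V a) → ‖∑ a ∈ s, x a‖ ^ 2 ≤ N * ∑ a ∈ s, ‖x a‖ ^ 2

/-- `r a` solves the local residual problem for the error `e` on each patch space `V a`, `a ∈ s`,
that is, `r a` is the orthogonal projection of `e` onto `V a`. -/
structure IsLocalSolution (s : Finset ι) (V : ι → Submodule 𝕜 E) (e : E) (r : ι → E) :
    Prop where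
  mem : ∀ a ∈ s, r a ∈ V a
  inner_eq : ∀ a ∈ s, ∀ v ∈ V a, ⟪r a, v⟫_𝕜 = ⟪e, v⟫_𝕜

/-- One additive Schwarz step with exact line search takes the error `e` to `e'`. The line search
along `ρ = ∑ a ∈ s, r a` is encoded by its optimality condition `⟪ρ, e'⟫ = 0`, so that no convention
for the step size is needed when `ρ = 0`. -/
def IsSchwarzStep (s : Finset ι) (V : ι → Submodule 𝕜 E) (e e' : E) : Prop :=
  ∃ r, IsLocalSolution s V e r ∧ (∃ c : 𝕜, e - e' = c • ∑ a ∈ s, r a) ∧ ⟪∑ a ∈ s, r a, e'⟫_𝕜 = 0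

section OneLevel

variable {s : Finset ι} {V : ι → Submodule 𝕜 E} {e e' : E} {r v : ι → E} {N : ℝ}

lemma HasOverlapBound.norm_sum_le (hV : HasOverlapBound s V N) (hv : ∀ a ∈ s, v a ∈ V a) :
    ‖∑ a ∈ s, v a‖ ≤ √N * √(∑ a ∈ s, ‖v a‖ ^ 2) := by
  rw [← Real.sqrt_mul' N (by positivity)]
  exact Real.le_sqrt_of_sq_le (hV v hv)

lemma HasOverlapBound.singleton (a : ι) (V : ι → Submodule 𝕜 E) (hN : 1 ≤ N) :
    HasOverlapBound {a} V N := fun x _ => by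
  simpa only [Finset.sum_singleton] using le_mul_of_one_le_left (sq_nonneg ‖x a‖) hN

lemma HasOverlapBound.map {κ : Type*} {t : Finset κ} (f : κ ↪ ι)
    (hV : HasOverlapBound t (V ∘ f) N) : HasOverlapBound (t.map f) V N := fun x hx => by
  simpa only [Finset.sum_map, Function.comp_apply] using hV (x ∘ f) (Finset.forall_mem_map.1 hx)

namespace IsLocalSolution

lemma inner_sum_eq (hr : IsLocalSolution s V e r) (hv : ∀ a ∈ s, v a ∈ V a) :
    ⟪e, ∑ a ∈ s, v a⟫_𝕜 = ∑ a ∈ s, ⟪r a, v a⟫_𝕜 := by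
  rw [inner_sum]
  exact Finset.sum_congr rfl fun a ha => (hr.inner_eq a ha _ (hv a ha)).symm

lemma norm_inner_sum_le (hr : IsLocalSolution s V e r) (hv : ∀ a ∈ s, v a ∈ V a) :
    ‖⟪e, ∑ a ∈ s, v a⟫_𝕜‖ ≤ √(∑ a ∈ s, ‖r a‖ ^ 2) * √(∑ a ∈ s, ‖v a‖ ^ 2) :=
  calc ‖⟪e, ∑ a ∈ s, v a⟫_𝕜‖ = ‖∑ a ∈ s, ⟪r a, v a⟫_𝕜‖ := by rw [hr.inner_sum_eq hv]
    _ ≤ ∑ a ∈ s, ‖r a‖ * ‖v a‖ := norm_sum_le_of_le s fun a _ => norm_inner_le_norm (r a) (v a)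
    _ ≤ _ := Real.sum_mul_le_sqrt_mul_sqrt s _ _

lemma norm_inner_sum_self (hr : IsLocalSolution s V e r) :
    ‖⟪e, ∑ a ∈ s, r a⟫_𝕜‖ = ∑ a ∈ s, ‖r a‖ ^ 2 := by
  rw [hr.inner_sum_eq hr.mem]
  simp_rw [inner_self_eq_norm_sq_to_K]
  rw [← RCLike.norm_of_nonneg (K := 𝕜) (by positivity : 0 ≤ ∑ a ∈ s, ‖r a‖ ^ 2)]
  push_cast
  rfl

lemma sqrt_sum_norm_sq_le (hr : IsLocalSolution s V e r) (horth : ⟪∑ a ∈ s, r a, e'⟫_𝕜 = 0)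
    (hV : HasOverlapBound s V N) : √(∑ a ∈ s, ‖r a‖ ^ 2) ≤ √N * ‖e - e'‖ := by
  set η := √(∑ a ∈ s, ‖r a‖ ^ 2)
  have hη : 0 ≤ η := Real.sqrt_nonneg _
  have hsq : η * η ≤ √N * ‖e - e'‖ * η :=
    calc η * η = ‖⟪e, ∑ a ∈ s, r a⟫_𝕜‖ := by
          rw [Real.mul_self_sqrt (by positivity), hr.norm_inner_sum_self]
      _ = ‖⟪e - e', ∑ a ∈ s, r a⟫_𝕜‖ := by
          rw [inner_sub_left, inner_eq_zero_symm.1 horth, sub_zero]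
      _ ≤ ‖e - e'‖ * (√N * η) :=
          (norm_inner_le_norm _ _).trans (by gcongr; exact hV.norm_sum_le hr.mem)
      _ = √N * ‖e - e'‖ * η := by ring
  obtain h | h := hη.eq_or_lt
  · rw [← h]
    positivity
  · exact le_of_mul_le_mul_right hsq h

end IsLocalSolution

namespace IsSchwarzStep

lemma map {κ : Type*} {t : Finset κ} (f : κ ↪ ι) (h : IsSchwarzStep t (V ∘ f) e e') :
    IsSchwarzStep (t.map f) V e e' := by
  obtain ⟨r, hr, hline, horth⟩ := h
  have hext (a : κ) : Function.extend f r 0 (f a) = r a := f.injective.extend_apply r 0 a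
  refine ⟨Function.extend f r 0, ⟨?_, ?_⟩, ?_, ?_⟩
  · simpa only [Finset.forall_mem_map, hext, Function.comp_apply] using hr.mem
  · simpa only [Finset.forall_mem_map, hext, Function.comp_apply] using hr.inner_eq
  · simpa only [Finset.sum_map, hext] using hline
  · simpa only [Finset.sum_map, hext] using horth

-- As `u` is orthogonal to the patch spaces, the residual of the iterate `w` is that of its error.
lemma of_residual {u w w' ρ : E} (c : 𝕜) (hu : ∀ a ∈ s, ∀ v ∈ V a, ⟪u, v⟫_𝕜 = 0)
    (hmem : ∀ a ∈ s, r a ∈ V a) (hr : ∀ a ∈ s, ∀ v ∈ V a, ⟪r a, v⟫_𝕜 = -⟪w, v⟫_𝕜)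
    (hρ : ρ = ∑ a ∈ s, r a) (hw' : w' = w + c • ρ) (horth : ⟪ρ, w'⟫_𝕜 = 0) :
    IsSchwarzStep s V (u - w) (u - w') := by
  subst hρ
  refine ⟨r, ⟨hmem, fun a ha v hv => ?_⟩, ⟨c, by rw [hw']; abel⟩, ?_⟩
  · rw [hr a ha v hv, inner_sub_left, hu a ha v hv, zero_sub]
  · have hρu : ⟪∑ a ∈ s, r a, u⟫_𝕜 = 0 := by
      rw [sum_inner]
      exact Finset.sum_eq_zero fun a ha => inner_eq_zero_symm.1 (hu a ha _ (hmem a ha))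
    rw [inner_sub_right, hρu, horth, sub_zero]

lemma singleton {u w ρ : E} {a : ι} (hu : ∀ v ∈ V a, ⟪u, v⟫_𝕜 = 0) (hmem : ρ ∈ V a)
    (hρ : ∀ v ∈ V a, ⟪ρ, v⟫_𝕜 = -⟪w, v⟫_𝕜) : IsSchwarzStep {a} V (u - w) (u - (w + ρ)) := by
  refine .of_residual (r := fun _ => ρ) (ρ := ρ) 1 ?_ ?_ ?_ ?_ (by rw [one_smul]) ?_
  · simpa only [Finset.mem_singleton, forall_eq] using hu
  · simpa only [Finset.mem_singleton, forall_eq] using hmem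
  · simpa only [Finset.mem_singleton, forall_eq] using hρ
  · rw [Finset.sum_singleton]
  · rw [inner_eq_zero_symm, inner_add_left, hρ ρ hmem, add_neg_cancel]

lemma of_lineSearch {u w ρ : E} {c : 𝕜} (hu : ∀ a ∈ s, ∀ v ∈ V a, ⟪u, v⟫_𝕜 = 0)
    (hmem : ∀ a ∈ s, r a ∈ V a) (hr : ∀ a ∈ s, ∀ v ∈ V a, ⟪r a, v⟫_𝕜 = -⟪w, v⟫_𝕜)
    (hρ : ρ = ∑ a ∈ s, r a) (hc : ‖ρ‖ ≠ 0 → c = -⟪ρ, w⟫_𝕜 / (‖ρ‖ : 𝕜) ^ 2) :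
    IsSchwarzStep s V (u - w) (u - (w + c • ρ)) := by
  refine .of_residual c hu hmem hr hρ rfl ?_
  by_cases hρ0 : ‖ρ‖ = 0
  · exact inner_eq_zero_of_left _ hρ0
  · have hnorm : (‖ρ‖ : 𝕜) ^ 2 ≠ 0 := pow_ne_zero 2 (RCLike.ofReal_ne_zero.2 hρ0)
    rw [hc hρ0, inner_add_right, inner_smul_right, inner_self_eq_norm_sq_to_K,
      div_mul_cancel₀ _ hnorm, add_neg_cancel]

lemma norm_sub_sq (h : IsSchwarzStep s V e e') : ‖e - e'‖ ^ 2 = ‖e‖ ^ 2 - ‖e'‖ ^ 2 := by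
  obtain ⟨r, -, ⟨c, hc⟩, horth⟩ := h
  have hsub : ⟪e - e', e'⟫_𝕜 = 0 := by rw [hc, inner_smul_left, horth, mul_zero]
  have := norm_add_sq_eq_norm_sq_add_norm_sq_of_inner_eq_zero _ _ hsub
  rw [sub_add_cancel] at this
  linarith

lemma norm_inner_sum_le (h : IsSchwarzStep s V e e') (hV : HasOverlapBound s V N)
    (hv : ∀ a ∈ s, v a ∈ V a) :
    ‖⟪e, ∑ a ∈ s, v a⟫_𝕜‖ ≤ √N * √(∑ a ∈ s, ‖v a‖ ^ 2) * ‖e - e'‖ := by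
  obtain ⟨r, hr, -, horth⟩ := h
  calc ‖⟪e, ∑ a ∈ s, v a⟫_𝕜‖ ≤ √(∑ a ∈ s, ‖r a‖ ^ 2) * √(∑ a ∈ s, ‖v a‖ ^ 2) :=
        hr.norm_inner_sum_le hv
    _ ≤ √N * ‖e - e'‖ * √(∑ a ∈ s, ‖v a‖ ^ 2) := by
        gcongr
        exact hr.sqrt_sum_norm_sq_le horth hV
    _ = √N * √(∑ a ∈ s, ‖v a‖ ^ 2) * ‖e - e'‖ := by ring

end IsSchwarzStep

end OneLevel

section Multilevel

variable {n : ℕ} {s : ℕ → Finset ι} {V : ℕ → ι → Submodule 𝕜 E} {e : ℕ → E} {N : ℝ}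

lemma IsSchwarzStep.sum_norm_sub_sq (hstep : ∀ k < n, IsSchwarzStep (s k) (V k) (e k) (e (k + 1))) :
    ∑ k ∈ Finset.range n, ‖e k - e (k + 1)‖ ^ 2 = ‖e 0‖ ^ 2 - ‖e n‖ ^ 2 := by
  rw [← Finset.sum_range_sub' (fun k => ‖e k‖ ^ 2)]
  exact Finset.sum_congr rfl fun k hk => (hstep k (Finset.mem_range.1 hk)).norm_sub_sq

lemma IsSchwarzStep.norm_inner_initial_error_le
    (hstep : ∀ k < n, IsSchwarzStep (s k) (V k) (e k) (e (k + 1)))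
    (hover : ∀ k < n, HasOverlapBound (s k) (V k) N) {k : ℕ} (hk : k < n) {v : ι → E}
    (hv : ∀ a ∈ s k, v a ∈ V k a) :
    ‖⟪e 0, ∑ a ∈ s k, v a⟫_𝕜‖ ≤
      √N * √(∑ a ∈ s k, ‖v a‖ ^ 2) * ∑ i ∈ Finset.range n, ‖e i - e (i + 1)‖ := by
  set w := ∑ a ∈ s k, v a
  set ω := √(∑ a ∈ s k, ‖v a‖ ^ 2)
  have hearlier : ‖e 0 - e k‖ ≤ ∑ i ∈ Finset.range k, ‖e i - e (i + 1)‖ := by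
    simpa only [dist_eq_norm] using dist_le_range_sum_dist e k
  calc ‖⟪e 0, w⟫_𝕜‖ = ‖⟪e 0 - e k, w⟫_𝕜 + ⟪e k, w⟫_𝕜‖ := by
        rw [← inner_add_left, sub_add_cancel]
    _ ≤ ‖e 0 - e k‖ * ‖w‖ + ‖⟪e k, w⟫_𝕜‖ :=
        (norm_add_le _ _).trans (by gcongr; exact norm_inner_le_norm _ _)
    _ ≤ (∑ i ∈ Finset.range k, ‖e i - e (i + 1)‖) * (√N * ω) + √N * ω * ‖e k - e (k + 1)‖ := by
        gcongr
        · exact (hover k hk).norm_sum_le hv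
        · exact (hstep k hk).norm_inner_sum_le (hover k hk) hv
    _ = √N * ω * ∑ i ∈ Finset.range (k + 1), ‖e i - e (i + 1)‖ := by
        rw [Finset.sum_range_succ]
        ring
    _ ≤ √N * ω * ∑ i ∈ Finset.range n, ‖e i - e (i + 1)‖ := by
        gcongr
        exact hk

variable {v : ℕ → ι → E} {C : ℝ}

lemma IsSchwarzStep.norm_initial_error_le
    (hstep : ∀ k < n, IsSchwarzStep (s k) (V k) (e k) (e (k + 1)))
    (hover : ∀ k < n, HasOverlapBound (s k) (V k) N)
    (hv : ∀ k < n, ∀ a ∈ s k, v k a ∈ V k a)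
    (hdec : e 0 = ∑ k ∈ Finset.range n, ∑ a ∈ s k, v k a) (hC : 0 ≤ C)
    (hstab : ∑ k ∈ Finset.range n, ∑ a ∈ s k, ‖v k a‖ ^ 2 ≤ C ^ 2 * ‖e 0‖ ^ 2) :
    ‖e 0‖ ≤ √N * C * n * √(∑ k ∈ Finset.range n, ‖e k - e (k + 1)‖ ^ 2) := by
  set ω : ℕ → ℝ := fun k => √(∑ a ∈ s k, ‖v k a‖ ^ 2)
  set η := √(∑ k ∈ Finset.range n, ‖e k - e (k + 1)‖ ^ 2)
  have hω : √(∑ k ∈ Finset.range n, ω k ^ 2) ≤ C * ‖e 0‖ := by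
    refine Real.sqrt_le_iff.2 ⟨by positivity, ?_⟩
    rw [mul_pow]
    refine le_of_eq_of_le (Finset.sum_congr rfl fun k _ => ?_) hstab
    exact Real.sq_sqrt (by positivity)
  have hpair : ‖e 0‖ * ‖e 0‖ ≤ √N * C * n * η * ‖e 0‖ :=
    calc ‖e 0‖ * ‖e 0‖ = ‖∑ k ∈ Finset.range n, ⟪e 0, ∑ a ∈ s k, v k a⟫_𝕜‖ := by
          rw [← inner_sum, ← hdec, inner_self_eq_norm_sq_to_K,
            ← RCLike.ofReal_pow, RCLike.norm_of_nonneg (sq_nonneg _), sq]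
      _ ≤ ∑ k ∈ Finset.range n, √N * ω k * ∑ i ∈ Finset.range n, ‖e i - e (i + 1)‖ :=
          norm_sum_le_of_le _ fun k hk =>
            have hk := Finset.mem_range.1 hk
            IsSchwarzStep.norm_inner_initial_error_le hstep hover hk (hv k hk)
      _ = √N * (∑ k ∈ Finset.range n, ω k) * ∑ i ∈ Finset.range n, ‖e i - e (i + 1)‖ := by
          rw [← Finset.sum_mul, ← Finset.mul_sum]
      _ ≤ √N * (√n * (C * ‖e 0‖)) * (√n * η) := by
          have hsum (f : ℕ → ℝ) :=
            (Finset.card_range n) ▸ sum_le_sqrt_card_mul_sqrt_sum_sq (Finset.range n) f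
          gcongr
          · exact (hsum ω).trans (by gcongr)
          · exact hsum _
      _ = √N * C * (√n * √n) * η * ‖e 0‖ := by ring
      _ = √N * C * n * η * ‖e 0‖ := by rw [Real.mul_self_sqrt n.cast_nonneg]
  obtain h | h := (norm_nonneg (e 0)).eq_or_lt
  · rw [← h]
    positivity
  · exact le_of_mul_le_mul_right hpair h

theorem multigrid_error_contraction_general
    (hstep : ∀ k < n, IsSchwarzStep (s k) (V k) (e k) (e (k + 1)))
    (hN : 0 < N) (hover : ∀ k < n, HasOverlapBound (s k) (V k) N)
    (hv : ∀ k < n, ∀ a ∈ s k, v k a ∈ V k a)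
    (hdec : e 0 = ∑ k ∈ Finset.range n, ∑ a ∈ s k, v k a) (hC : 0 < C)
    (hstab : ∑ k ∈ Finset.range n, ∑ a ∈ s k, ‖v k a‖ ^ 2 ≤ C ^ 2 * ‖e 0‖ ^ 2)
    (hn : 0 < n) :
    ‖e n‖ ≤ √(1 - 1 / (N * C ^ 2 * (n : ℝ) ^ 2)) * ‖e 0‖ := by
  have hK : 0 < N * C ^ 2 * (n : ℝ) ^ 2 := by positivity
  have heff : ‖e 0‖ ^ 2 ≤ N * C ^ 2 * n ^ 2 * (‖e 0‖ ^ 2 - ‖e n‖ ^ 2) :=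
    calc ‖e 0‖ ^ 2 ≤ (√N * C * n * √(∑ k ∈ Finset.range n, ‖e k - e (k + 1)‖ ^ 2)) ^ 2 := by
          gcongr
          exact IsSchwarzStep.norm_initial_error_le hstep hover hv hdec hC.le hstab
      _ = N * C ^ 2 * n ^ 2 * ∑ k ∈ Finset.range n, ‖e k - e (k + 1)‖ ^ 2 := by
          rw [mul_pow, mul_pow, mul_pow, Real.sq_sqrt hN.le, Real.sq_sqrt (by positivity)]
      _ = N * C ^ 2 * n ^ 2 * (‖e 0‖ ^ 2 - ‖e n‖ ^ 2) := by rw [IsSchwarzStep.sum_norm_sub_sq hstep]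
  rw [← Real.sqrt_sq (norm_nonneg (e 0)), ← Real.sqrt_mul' _ (sq_nonneg _)]
  refine Real.le_sqrt_of_sq_le ?_
  rw [sub_mul, one_mul, le_sub_comm, div_mul_eq_mul_div, one_mul, div_le_iff₀' hK]
  exact heff

end Multilevel

end Schwarz

/-- Abstract form of Theorem 5.3 (error contraction) for the multigrid solver
of Algorithm 4.1 with explicit contraction factor: under a multilevel stable
decomposition of the error with constant `C_SD` and the finite-overlap bound
with constant `N`, the new iterate `u^{i+1} = u_J` satisfies
`‖u - u^{i+1}‖ ≤ α ‖u - u^i‖` with `α = √(1 - 1/(N·C_SD²·(J+2)²)) < 1`. -/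
theorem multigrid_error_contraction
    {H : Type*} [NormedAddCommGroup H] [InnerProductSpace ℝ H]
    (J : ℕ) {ι : Type*} (𝒱 : ℕ → Finset ι)
    (V0 Vc : Submodule ℝ H) (Vloc : ℕ → ι → Submodule ℝ H)
    (hVc : Vc ≤ V0)
    (hVloc : ∀ j ∈ Finset.Icc 1 J, ∀ a ∈ 𝒱 j, Vloc j a ≤ V0)
    (u ui : H)
    (hu : ∀ v ∈ V0, ⟪u, v⟫ = 0)
    (herr : u - ui ∈ V0)
    (ρ : ℕ → H) (ρloc : ℕ → ι → H) (lam : ℕ → ℝ) (uu : ℕ → H)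
    (hρ0mem : ρ 0 ∈ Vc)
    (hρ0 : ∀ v ∈ Vc, ⟪ρ 0, v⟫ = -⟪ui, v⟫)
    (hlam0 : lam 0 = 1)
    (huu0 : uu 0 = ui + lam 0 • ρ 0)
    (hρlocmem : ∀ j ∈ Finset.Icc 1 J, ∀ a ∈ 𝒱 j, ρloc j a ∈ Vloc j a)
    (hρloc : ∀ j ∈ Finset.Icc 1 J, ∀ a ∈ 𝒱 j, ∀ v ∈ Vloc j a,
      ⟪ρloc j a, v⟫ = -⟪uu (j - 1), v⟫)
    (hρj : ∀ j ∈ Finset.Icc 1 J, ρ j = ∑ a ∈ 𝒱 j, ρloc j a)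
    (hlamj : ∀ j ∈ Finset.Icc 1 J, ρ j ≠ 0 →
      lam j = -⟪uu (j - 1), ρ j⟫ / ‖ρ j‖ ^ 2)
    (hlamj' : ∀ j ∈ Finset.Icc 1 J, ρ j = 0 → lam j = 1)
    (huuj : ∀ j ∈ Finset.Icc 1 J, uu j = uu (j - 1) + lam j • ρ j)
    (v0 : H) (vja : ℕ → ι → H)
    (hv0 : v0 ∈ Vc)
    (hvja : ∀ j ∈ Finset.Icc 1 J, ∀ a ∈ 𝒱 j, vja j a ∈ Vloc j a)
    (hdec : u - ui = v0 + ∑ j ∈ Finset.Icc 1 J, ∑ a ∈ 𝒱 j, vja j a)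
    (CSD : ℝ) (hCSD : 1 ≤ CSD)
    (hstab : ‖v0‖ ^ 2 + ∑ j ∈ Finset.Icc 1 J, ∑ a ∈ 𝒱 j, ‖vja j a‖ ^ 2 ≤
      CSD ^ 2 * ‖u - ui‖ ^ 2)
    (N : ℝ) (hN : 1 ≤ N)
    (hover : ∀ j ∈ Finset.Icc 1 J, ∀ x : ι → H,
      (∀ a ∈ 𝒱 j, x a ∈ Vloc j a) →
      ‖∑ a ∈ 𝒱 j, x a‖ ^ 2 ≤ N * ∑ a ∈ 𝒱 j, ‖x a‖ ^ 2) :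
    ‖u - uu J‖ ≤
      Real.sqrt (1 - 1 / (N * CSD ^ 2 * ((J : ℝ) + 2) ^ 2)) * ‖u - ui‖ ∧
    Real.sqrt (1 - 1 / (N * CSD ^ 2 * ((J : ℝ) + 2) ^ 2)) < 1 := by
  -- The coarse space is the only patch, `none`, of level `0`; `e k` is the error before level `k`.
  let s : ℕ → Finset (Option ι) := fun | 0 => {none} | k + 1 => (𝒱 (k + 1)).map .some
  let V : ℕ → Option ι → Submodule ℝ H := fun k a => a.elim Vc (Vloc k)
  let v : ℕ → Option ι → H := fun k a => a.elim v0 (vja k)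
  let e : ℕ → H := fun | 0 => u - ui | k + 1 => u - uu k
  have hlevel {k : ℕ} (hk : k + 1 < J + 1) : k + 1 ∈ Finset.Icc 1 J :=
    Finset.mem_Icc.2 ⟨k.succ_pos, Nat.lt_succ_iff.1 hk⟩
  have hstep : ∀ k < J + 1, IsSchwarzStep (s k) (V k) (e k) (e (k + 1))
    | 0, _ => by
      simpa only [e, huu0, hlam0, one_smul] using .singleton (fun v hv => hu v (hVc hv)) hρ0mem hρ0
    | k + 1, hk => by
      have hj := hlevel hk
      simpa only [e, huuj _ hj] using .map .some <| .of_lineSearch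
        (fun a ha v hv => hu v (hVloc _ hj a ha hv)) (hρlocmem _ hj) (hρloc _ hj) (hρj _ hj)
        (fun h => by rw [real_inner_comm]; exact hlamj _ hj (norm_ne_zero_iff.1 h))
  have hoverlap : ∀ k < J + 1, HasOverlapBound (s k) (V k) N
    | 0, _ => .singleton none _ hN
    | k + 1, hk => .map .some (hover _ (hlevel hk))
  have hv : ∀ k < J + 1, ∀ a ∈ s k, v k a ∈ V k a
    | 0, _ => by simpa [s, V, v] using hv0
    | k + 1, hk => Finset.forall_mem_map.2 (hvja _ (hlevel hk))
  have hcontr := multigrid_error_contraction_general (C := CSD) hstep (by positivity) hoverlap hv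
    (by simpa [e, s, v, Finset.sum_range_succ', sum_Icc_one_eq_sum_range, add_comm] using hdec)
    (by positivity)
    (by simpa [e, s, v, Finset.sum_range_succ', sum_Icc_one_eq_sum_range, add_comm] using hstab)
    J.succ_pos
  exact ⟨hcontr.trans (by gcongr; norm_num), sqrt_one_sub_one_div_lt_one (by positivity)⟩
end
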